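/- Let C be a chamber, let A be an embedded arc in C with both endpoints in the top C_t, and let B be an embedded arc in C with both endpoints in the bottom C_b, with A and B disjoint and meeting ∂C only at their endpoints. Suppose there exists an embedded disc D ⊂ C whose boundary is A together with an arc in C_t joining the two endpoints of A, and suppose B intersects D transversally in exactly one point. Then every interior meridional disc of C intersects A ∪ B; consequently the geometric index N(A ∪ B, C) is at least 2, and if some interior meridional disc meets A ∪ B transversally in exactly 2 points then N(A ∪ B, C) = 2 (so A ∪ B forms a clasp, as in the Whitehead clasp). -/

import Mathlib

open Set Topology unitInterval

noncomputable section

/-- The closed unit 2-disc `B²` in the complex plane. -/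
abbrev Disc2 : Set ℂ := Metric.closedBall 0 1

variable {X : Type} [TopologicalSpace X] {Y : Type} [TopologicalSpace Y]

/-- A simple closed curve: a subset homeomorphic to the circle. -/
def IsSimpleClosedCurve (A : Set X) : Prop := Nonempty (↥A ≃ₜ Circle)

/-- An arc: a subset homeomorphic to the unit interval. -/
def IsArc (A : Set X) : Prop := Nonempty (↥A ≃ₜ unitInterval)

/-- A link: a finite disjoint union of simple closed curves. -/
def IsLink (L : Set X) : Prop :=
  ∃ (k : ℕ) (c : Fin k → Set X), (∀ i, IsSimpleClosedCurve (c i)) ∧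
    (Pairwise fun i j => Disjoint (c i) (c j)) ∧ L = ⋃ i, c i

/-- `A` is null-homotopic inside the subset `Y`: `A ⊆ Y` and the inclusion of `A`
into `Y` is homotopic to a constant map. -/
def NullHomotopicIn (A Y : Set X) : Prop :=
  ∃ (h : A ⊆ Y) (y : ↥Y),
    (⟨Set.inclusion h, continuous_inclusion h⟩ : C(↥A, ↥Y)).Homotopic
      (ContinuousMap.const _ y)

/-- Two simple closed curves `A` and `B` are isotopic within the subset `Y`:
there is a continuous one-parameter family of embedded circles in `Y`
starting at a parametrization of `A` and ending at one of `B`. -/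
def IsotopicCirclesIn (Y A B : Set X) : Prop :=
  ∃ H : C(Circle × unitInterval, X),
    (∀ t, Function.Injective fun s => H (s, t)) ∧
    (∀ s t, H (s, t) ∈ Y) ∧
    (Set.range fun s => H (s, 0)) = A ∧
    (Set.range fun s => H (s, 1)) = B

/-- A solid torus in `X`: a subset together with a homeomorphism to `B² × S¹`. -/
structure SolidTorus (X : Type) [TopologicalSpace X] where
  carrier : Set X
  homeo : ↥carrier ≃ₜ ↥Disc2 × Circle

namespace SolidTorus

variable (T : SolidTorus X)

/-- The boundary torus `∂T`, corresponding to `∂B² × S¹`. -/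
def bdry : Set X := Subtype.val '' (T.homeo ⁻¹' {p | ‖(p.1 : ℂ)‖ = 1})

/-- The (manifold) interior of the solid torus, corresponding to `int B² × S¹`. -/
def intr : Set X := Subtype.val '' (T.homeo ⁻¹' {p | ‖(p.1 : ℂ)‖ < 1})

/-- The standard meridian curve `∂B² × {1}` on the boundary of the solid torus. -/
def meridianCurve : Set X :=
  Subtype.val '' (T.homeo ⁻¹' {p | ‖(p.1 : ℂ)‖ = 1 ∧ p.2 = 1})

/-- The core circle `{0} × S¹` of the solid torus. -/
def core : Set X := Subtype.val '' (T.homeo ⁻¹' {p | (p.1 : ℂ) = 0})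

end SolidTorus

/-- A meridional disc of a solid torus `T`: an embedded disc `D ⊆ T` with
`D ∩ ∂T = ∂D` and with `∂D` isotopic in `∂T` to the meridian `∂B² × {pt}`. -/
structure MeridionalDisc (T : SolidTorus X) where
  carrier : Set X
  subset : carrier ⊆ T.carrier
  homeo : ↥carrier ≃ₜ ↥Disc2
  bdry : Set X
  bdry_spec : bdry = Subtype.val '' (homeo ⁻¹' {p | ‖(p : ℂ)‖ = 1})
  inter_bdry : carrier ∩ T.bdry = bdry
  isotopic_meridian : IsotopicCirclesIn T.bdry bdry T.meridianCurve

/-- The geometric index `N(L, T)` of a subset `L` of a solid torus `T`: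
the minimum over all meridional discs `D` of `T` of the number of points of `L ∩ D`. -/
def geomIndex (L : Set X) (T : SolidTorus X) : ℕ∞ :=
  ⨅ D : MeridionalDisc T, (L ∩ D.carrier).encard

/-- The geometric index of a finite union of disjoint solid tori in `T`:
the geometric index of a core link of the union. -/
def geomIndexTori {k : ℕ} (F : Fin k → SolidTorus X) (T : SolidTorus X) : ℕ∞ :=
  geomIndex (⋃ i, (F i).core) T

/-- The 3-sphere. -/
abbrev S3 : Type := ↥(Metric.sphere (0 : EuclideanSpace ℝ (Fin 4)) 1)

/-- A simple closed curve is an unknot if it bounds an embedded disc. -/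
def IsUnknot (J : Set X) : Prop :=
  ∃ (D : Set X) (e : ↥D ≃ₜ ↥Disc2),
    J = Subtype.val '' (e ⁻¹' {p | ‖(p : ℂ)‖ = 1})

/-- A solid torus is unknotted if its core circle is an unknot. -/
def SolidTorus.Unknotted (T : SolidTorus X) : Prop := IsUnknot T.core

/-- The surface `D` and the set `L` intersect transversally at `x`: in suitable
local coordinates, `D` is the plane `z = 0` and `L` is the `z`-axis. -/
def TransverseAt (D L : Set X) (x : X) : Prop :=
  ∃ (U : Set X) (φ : ↥U ≃ₜ EuclideanSpace ℝ (Fin 3)), IsOpen U ∧ x ∈ U ∧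
    (φ '' {y : ↥U | (y : X) ∈ D}) = {v | v 2 = 0} ∧
    (φ '' {y : ↥U | (y : X) ∈ L}) = {v | v 0 = 0 ∧ v 1 = 0}

/-- `D` meets `L` transversally. -/
def MeetsTransversally (D L : Set X) : Prop := ∀ x ∈ D ∩ L, TransverseAt D L x

/-- `S` separates `A` from `B`: `A` and `B` are disjoint from `S` and no
connected subset of the complement of `S` meets both `A` and `B`. -/
def Separates (S A B : Set X) : Prop :=
  Disjoint A S ∧ Disjoint B S ∧
  ∀ P : Set X, IsPreconnected P → Disjoint P S →
    (P ∩ A).Nonempty → (P ∩ B).Nonempty → False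

/-- Two disjoint embedded tori `A` and `B` are parallel: the compact region they
cobound is homeomorphic to `A × [0,1]`. -/
def ParallelTori (A B : Set X) : Prop :=
  ∃ R : Set X, IsCompact R ∧ A ⊆ R ∧ B ⊆ R ∧ frontier R = A ∪ B ∧
    Nonempty (↥R ≃ₜ ↥A × unitInterval)

/-- A chamber: a subset together with a homeomorphism to `B² × [0,1]`. -/
structure Chamber (X : Type) [TopologicalSpace X] where
  carrier : Set X
  homeo : ↥carrier ≃ₜ ↥Disc2 × unitInterval

namespace Chamber

variable (C : Chamber X)

/-- The top `C_t = B² × {1}` of the chamber. -/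
def top : Set X := Subtype.val '' (C.homeo ⁻¹' {p | p.2 = 1})

/-- The bottom `C_b = B² × {0}` of the chamber. -/
def bot : Set X := Subtype.val '' (C.homeo ⁻¹' {p | p.2 = 0})

/-- The boundary `∂C = (∂B² × [0,1]) ∪ (B² × {0,1})` of the chamber. -/
def bdry : Set X :=
  Subtype.val '' (C.homeo ⁻¹' {p | ‖(p.1 : ℂ)‖ = 1 ∨ p.2 = 0 ∨ p.2 = 1})

/-- The side annulus `∂C − (C_t ∪ C_b)`. -/
def sideAnnulus : Set X := C.bdry \ (C.top ∪ C.bot)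

end Chamber

/-- An interior meridional disc of a chamber `C`: an embedded disc
`M ⊆ C − (C_t ∪ C_b)` with `M ∩ ∂C = ∂M` and `∂M` essential
(non null-homotopic) in the annulus `∂C − (C_t ∪ C_b)`. -/
structure InteriorMeridionalDisc (C : Chamber X) where
  carrier : Set X
  subset : carrier ⊆ C.carrier \ (C.top ∪ C.bot)
  homeo : ↥carrier ≃ₜ ↥Disc2
  bdry : Set X
  bdry_spec : bdry = Subtype.val '' (homeo ⁻¹' {p | ‖(p : ℂ)‖ = 1})
  inter_bdry : carrier ∩ C.bdry = bdry
  bdry_sub : bdry ⊆ C.sideAnnulus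
  essential : ¬ NullHomotopicIn bdry C.sideAnnulus

/-- The geometric index `N(L, C)` of a subset `L` of a chamber `C`: the minimum
over all interior meridional discs `M` of `C` of the number of points of `L ∩ M`. -/
def chamberIndex (L : Set X) (C : Chamber X) : ℕ∞ :=
  ⨅ M : InteriorMeridionalDisc C, (L ∩ M.carrier).encard

/-- A spanning arc in a chamber `C`: an embedded arc with one endpoint in the
bottom, the other endpoint in the top, and interior in the interior of `C`. -/
def IsSpanningArc (A : Set X) (C : Chamber X) : Prop :=
  A ⊆ C.carrier ∧ ∃ e : unitInterval ≃ₜ ↥A,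
    ((e 0 : ↥A) : X) ∈ C.bot ∧ ((e 1 : ↥A) : X) ∈ C.top ∧
    ∀ t : unitInterval, t ≠ 0 → t ≠ 1 → ((e t : ↥A) : X) ∈ C.carrier \ C.bdry

/-- An embedded arc in the chamber `C` with both endpoints in the set `F`
(e.g. `F = C.top`) and interior in the interior of `C`. -/
def IsArcWithEndpointsIn (A : Set X) (C : Chamber X) (F : Set X) : Prop :=
  A ⊆ C.carrier ∧ ∃ e : unitInterval ≃ₜ ↥A,
    ((e 0 : ↥A) : X) ∈ F ∧ ((e 1 : ↥A) : X) ∈ F ∧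
    ∀ t : unitInterval, t ≠ 0 → t ≠ 1 → ((e t : ↥A) : X) ∈ C.carrier \ C.bdry

/-- A link in a chamber `C`: a finite disjoint union of arcs with endpoints in
`C_t ∪ C_b` (meeting `∂C` only at their endpoints) and of simple closed curves
in `C − ∂C`. -/
def IsChamberLink (L : Set X) (C : Chamber X) : Prop :=
  ∃ (p q : ℕ) (a : Fin p → Set X) (s : Fin q → Set X),
    (∀ i, IsArcWithEndpointsIn (a i) C (C.top ∪ C.bot)) ∧
    (∀ j, IsSimpleClosedCurve (s j) ∧ s j ⊆ C.carrier \ C.bdry) ∧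
    (Pairwise fun i j => Disjoint (a i) (a j)) ∧
    (Pairwise fun i j => Disjoint (s i) (s j)) ∧
    (∀ i j, Disjoint (a i) (s j)) ∧
    L = (⋃ i, a i) ∪ ⋃ j, s j

/-- A clasp in a chamber `C`: a link `A ∪ B ∪ S` of geometric index 2 in `C`,
where `A` is an arc with both endpoints in `C_t`, `B` is an arc with both
endpoints in `C_b`, and `S` is a possibly empty union of simple closed curves
in `C − ∂C`. -/
def IsClasp (K : Set X) (C : Chamber X) : Prop :=
  ∃ A B S : Set X,
    IsArcWithEndpointsIn A C C.top ∧ IsArcWithEndpointsIn B C C.bot ∧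
    (∃ (q : ℕ) (s : Fin q → Set X), (∀ j, IsSimpleClosedCurve (s j) ∧
        s j ⊆ C.carrier \ C.bdry) ∧
      (Pairwise fun i j => Disjoint (s i) (s j)) ∧ S = ⋃ j, s j) ∧
    Disjoint A B ∧ Disjoint A S ∧ Disjoint B S ∧
    K = A ∪ B ∪ S ∧ chamberIndex K C = 2

/-- A system of `m` cyclically ordered pairwise disjoint meridional discs in a
solid torus `T`, cutting `T` into `m` chambers, the `i`-th chamber lying between
the consecutive discs `D_i` (its bottom) and `D_{i+1 mod m}` (its top). -/
structure ChamberSystem (T : SolidTorus X) (m : ℕ) where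
  disc : Fin m → MeridionalDisc T
  disc_disjoint : Pairwise fun i j => Disjoint (disc i).carrier (disc j).carrier
  chamber : Fin m → Chamber X
  chamber_sub : ∀ i, (chamber i).carrier ⊆ T.carrier
  bot_eq : ∀ i, (chamber i).bot = (disc i).carrier
  top_eq : ∀ i, (chamber i).top = (disc (finRotate m i)).carrier
  cover : (⋃ i, (chamber i).carrier) = T.carrier
  overlap : ∀ i j, i ≠ j →
    (chamber i).carrier ∩ (chamber j).carrier ⊆ ⋃ k, (disc k).carrier

/-- Each meridional disc of the system meets `L` transversally in exactly `n` points. -/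
def ChamberSystem.Transversal {T : SolidTorus X} {m : ℕ} (S : ChamberSystem T m)
    (L : Set X) (n : ℕ) : Prop :=
  ∀ i, MeetsTransversally (S.disc i).carrier L ∧
    (L ∩ (S.disc i).carrier).encard = n

/-- The winding degree of a self-map of the circle, via a lift along
`t ↦ exp (i t)`. -/
def CircleDegree (f : C(Circle, Circle)) (n : ℤ) : Prop :=
  ∃ F : C(ℝ, ℝ), (∀ t : ℝ, Circle.exp (F t) = f (Circle.exp t)) ∧
    F (2 * Real.pi) = F 0 + n * (2 * Real.pi)

/-- The algebraic index of a simple closed curve `J` in a solid torus `T` is `a`: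
`J ⊆ T` and some (hence, up to sign, any) parametrization of `J`, composed with
the projection of `T ≅ B² × S¹` to the `S¹` factor, has winding degree `±a`. -/
def HasAlgIndex (J : Set X) (T : SolidTorus X) (a : ℕ) : Prop :=
  ∃ (hJ : J ⊆ T.carrier) (e : Circle ≃ₜ ↥J) (n : ℤ),
    CircleDegree ⟨fun s => (T.homeo (Set.inclusion hJ (e s))).2,
      continuous_snd.comp (T.homeo.continuous.comp
        ((continuous_inclusion hJ).comp e.continuous))⟩ n ∧ a = n.natAbs

/-!
A meridional disc `M` has boundary winding exactly once around the side of the chamber, because an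
embedded essential curve in an annulus has winding number `±1`. Hence `M` separates top from
bottom: the chamber is the union of closed sets `P ⊇ C_t` and `N ⊇ C_b` with `P ∩ N = M`. If `M`
met `A ∪ B` in at most one point, connectedness would put `A` in `P` and `B` in `N`, with `∂D` or
`B` missing `M`. The disc `M` is an absolute extensor, so the chamber retracts onto `P` and onto
`N`, and pushing `D` or `B` along such a retraction unlinks `∂D` from `B`: if `B` is prolonged
downwards, the map `(d, t) ↦ D(d) − B(t)` on the boundary of the cylinder `B² × [−1, 1]` extends
to the whole cylinder without zeros. But the only zero of that map inside is the transverse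
crossing, where in a chart the map is the difference of the inclusions of two complementary
subspaces, so no such extension exists.

That the identity of a sphere does not extend to the ball without zeros is the no-retraction
theorem, proved by the volume argument of Milnor and Rogers: for a smooth retraction `f` the
volume of the image of `x ↦ x + t (f x - x)` is a polynomial in `t`, constant for small `t` and
zero for `t = 1`.
-/

theorem exists_continuousOn_union {α β : Type*} [TopologicalSpace α] [TopologicalSpace β]
    {s t : Set α} (hs : IsClosed s) (ht : IsClosed t) {f g : α → β} (hf : ContinuousOn f s)
    (hg : ContinuousOn g t) (hfg : EqOn f g (s ∩ t)) :
    ∃ h : α → β, ContinuousOn h (s ∪ t) ∧ EqOn h f s ∧ EqOn h g t := by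
  classical
  have hleft : EqOn (s.piecewise f g) f s := piecewise_eqOn s f g
  have hright : EqOn (s.piecewise f g) g t := fun x hx => by
    by_cases hxs : x ∈ s
    · rw [hleft hxs, hfg ⟨hxs, hx⟩]
    · exact piecewise_eq_of_notMem s f g hxs
  exact ⟨s.piecewise f g, (hf.congr hleft).union_of_isClosed (hg.congr hright) hs ht,
    hleft, hright⟩

section BallRetract

variable {E : Type*} [NormedAddCommGroup E] [NormedSpace ℝ E] {r : ℝ} {x : E}

/-- The radial retraction of a normed space onto its closed ball of radius `r > 0` about `0`. -/
def ballRetract (r : ℝ) (x : E) : E := (r / max r ‖x‖) • x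

theorem ballRetract_of_norm_le (hr : 0 < r) (hx : ‖x‖ ≤ r) : ballRetract r x = x := by
  rw [ballRetract, max_eq_left hx, div_self hr.ne', one_smul]

theorem norm_ballRetract (hr : 0 < r) (x : E) : ‖ballRetract r x‖ = min r ‖x‖ := by
  have hmax : 0 < max r ‖x‖ := lt_max_of_lt_left hr
  rw [ballRetract, norm_smul, Real.norm_of_nonneg (by positivity), div_mul_eq_mul_div,
    div_eq_iff hmax.ne', min_mul_max]

theorem ballRetract_mem_closedBall (hr : 0 < r) (x : E) :
    ballRetract r x ∈ Metric.closedBall (0 : E) r := by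
  rw [mem_closedBall_zero_iff, norm_ballRetract hr]
  exact min_le_left _ _

theorem ballRetract_mem_sphere (hr : 0 < r) (hx : r ≤ ‖x‖) :
    ballRetract r x ∈ Metric.sphere (0 : E) r := by
  rw [mem_sphere_zero_iff_norm, norm_ballRetract hr, min_eq_left hx]

theorem ballRetract_eq_zero_iff (hr : 0 < r) : ballRetract r x = 0 ↔ x = 0 := by
  rw [ballRetract, smul_eq_zero_iff_right (div_pos hr (lt_max_of_lt_left hr)).ne']

theorem lipschitzWith_ballRetract (hr : 0 < r) : LipschitzWith 2 (ballRetract r : E → E) := by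
  refine LipschitzWith.of_dist_le_mul fun x y => ?_
  have hx : 0 < max r ‖x‖ := lt_max_of_lt_left hr
  have hy : 0 < max r ‖y‖ := lt_max_of_lt_left hr
  have hmax : |max r ‖y‖ - max r ‖x‖| ≤ ‖x - y‖ :=
    (abs_max_sub_max_le_max r ‖y‖ r ‖x‖).trans (by
      rw [sub_self, abs_zero, max_eq_right (abs_nonneg _), norm_sub_rev]
      exact abs_norm_sub_norm_le y x)
  have hscale : ‖(r / max r ‖x‖) • (x - y)‖ ≤ ‖x - y‖ := by
    rw [norm_smul, Real.norm_of_nonneg (by positivity)]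
    exact mul_le_of_le_one_left (norm_nonneg _) (div_le_one_of_le₀ (le_max_left _ _) hx.le)
  have hfactor : ‖(r / max r ‖x‖ - r / max r ‖y‖) • y‖ ≤ ‖x - y‖ := by
    have hdiff : r / max r ‖x‖ - r / max r ‖y‖ =
        r / max r ‖x‖ * ((max r ‖y‖ - max r ‖x‖) / max r ‖y‖) := by
      field_simp
    have hnorm : ‖(r / max r ‖x‖ - r / max r ‖y‖) • y‖ =
        r / max r ‖x‖ * (|max r ‖y‖ - max r ‖x‖| * (‖y‖ / max r ‖y‖)) := by
      rw [norm_smul, hdiff, norm_mul, norm_div, norm_div, Real.norm_of_nonneg hr.le,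
        Real.norm_of_nonneg hx.le, Real.norm_of_nonneg hy.le, Real.norm_eq_abs]
      ring
    rw [hnorm]
    calc r / max r ‖x‖ * (|max r ‖y‖ - max r ‖x‖| * (‖y‖ / max r ‖y‖))
        ≤ 1 * (‖x - y‖ * 1) := by
          gcongr
          · exact div_le_one_of_le₀ (le_max_left _ _) hx.le
          · exact div_le_one_of_le₀ (le_max_right _ _) hy.le
      _ = ‖x - y‖ := by ring
  have hsplit : ballRetract r x - ballRetract r y =
      (r / max r ‖x‖) • (x - y) + (r / max r ‖x‖ - r / max r ‖y‖) • y := by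
    simp only [ballRetract]
    module
  calc dist (ballRetract r x) (ballRetract r y) ≤ ‖x - y‖ + ‖x - y‖ := by
        rw [dist_eq_norm, hsplit]
        exact (norm_add_le _ _).trans (add_le_add hscale hfactor)
    _ = (2 : NNReal) * dist x y := by rw [dist_eq_norm, NNReal.coe_ofNat, two_mul]

theorem continuous_ballRetract (hr : 0 < r) : Continuous (ballRetract r : E → E) :=
  (lipschitzWith_ballRetract hr).continuous

end BallRetract

section Brouwer

theorem exists_eval_eq_sum_mul_eval {K : Type*} [Field K] {S : Set K} (hS : S.Infinite) (n : ℕ)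
    (x : K) :
    ∃ (s : Finset K) (w : K → K), ↑s ⊆ S ∧ ∀ p : Polynomial K, p.natDegree ≤ n →
      p.eval x = ∑ t ∈ s, w t * p.eval t := by
  classical
  obtain ⟨s, hsS, hs⟩ := hS.exists_subset_card_eq (n + 1)
  refine ⟨s, fun t => (Lagrange.basis s id t).eval x, hsS, fun p hp => ?_⟩
  have hdeg : p.degree < s.card := by
    rw [hs]
    exact Polynomial.degree_le_natDegree.trans_lt (by exact_mod_cast Nat.lt_succ_of_le hp)
  conv_lhs => rw [Lagrange.eq_interpolate (injOn_id _) hdeg, Lagrange.interpolate_apply,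
    Polynomial.eval_finsetSum]
  exact Finset.sum_congr rfl fun t _ => by
    rw [Polynomial.eval_mul, Polynomial.eval_C, mul_comm, id]

theorem exists_polynomial_eval_eq_det_one_add_smul {R M : Type*} [CommRing R] [Nontrivial R]
    [AddCommGroup M] [Module R M] [Module.Free R M] [Module.Finite R M] (A : Module.End R M) :
    ∃ p : Polynomial R, p.natDegree ≤ Module.finrank R M ∧
      ∀ t : R, p.eval t = LinearMap.det (1 + t • A) := by
  classical
  let b := Module.finBasis R M
  let B := LinearMap.toMatrix b b A
  refine ⟨((Polynomial.X : Polynomial R) • B.map Polynomial.C +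
    (1 : Matrix _ _ R).map Polynomial.C).det, ?_, fun t => ?_⟩
  · exact (Polynomial.natDegree_det_X_add_C_le B 1).trans_eq (Fintype.card_fin _)
  · have hmatrix : LinearMap.toMatrix b b (1 + t • A) = t • B + 1 := by
      rw [map_add, map_smul, LinearMap.toMatrix_one, add_comm]
    rw [← LinearMap.det_toMatrix b, hmatrix, ← Polynomial.coe_evalRingHom, RingHom.map_det]
    congr 1
    ext i j
    by_cases hij : i = j <;> simp [hij, mul_comm t]

variable {E : Type*} [NormedAddCommGroup E]

theorem bijective_add_of_lipschitzWith [CompleteSpace E] [NormedSpace ℝ E] {k : E → E}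
    {c : NNReal} (hk : LipschitzWith c k) (hc : c < 1) : Function.Bijective fun x => x + k x := by
  have happrox : ApproximatesLinearOn (fun x => x + k x)
      (ContinuousLinearEquiv.refl ℝ E : E →L[ℝ] E) univ c := fun x _ y _ => by
    have hdiff : x + k x - (y + k y) - (ContinuousLinearEquiv.refl ℝ E : E →L[ℝ] E) (x - y) =
        k x - k y := by
      rw [ContinuousLinearEquiv.coe_refl, ContinuousLinearMap.id_apply]
      abel
    rw [hdiff]
    exact hk.norm_sub_le x y
  have hsmall : Subsingleton E ∨
      c < ‖((ContinuousLinearEquiv.refl ℝ E).symm : E →L[ℝ] E)‖₊⁻¹ := by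
    rcases subsingleton_or_nontrivial E with hE | hE
    · exact .inl hE
    have hone : ‖((ContinuousLinearEquiv.refl ℝ E).symm : E →L[ℝ] E)‖₊ = 1 :=
      NNReal.eq ContinuousLinearMap.norm_id
    exact .inr (by rwa [hone, inv_one])
  exact ⟨injOn_univ.1 (happrox.injOn hsmall), happrox.surjective hsmall⟩

theorem image_eq_self_of_eqOn_compl {α : Type*} {g : α → α} (hg : Function.Bijective g) {s : Set α}
    (hs : EqOn g id sᶜ) : g '' s = s := by
  have hcompl : (g '' s)ᶜ = sᶜ := by rw [← image_compl_eq hg, hs.image_eq, image_id]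
  exact compl_injective hcompl

variable [NormedSpace ℝ E]

theorem eventually_injOn_and_image_ball_eq [CompleteSpace E] {h : E → E} {L : NNReal}
    (hL : LipschitzOnWith L h (Metric.closedBall 0 1)) (h0 : ∀ x, ‖x‖ = 1 → h x = 0) :
    ∀ᶠ t : ℝ in 𝓝 0, InjOn (fun x => x + t • h x) (Metric.ball 0 1) ∧
      (fun x => x + t • h x) '' Metric.ball 0 1 = Metric.ball 0 1 := by
  have hk : LipschitzWith (L * 2) fun x => h (ballRetract 1 x) :=
    lipschitzOnWith_univ.1 (hL.comp (lipschitzWith_ballRetract one_pos).lipschitzOnWith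
      fun x _ => ballRetract_mem_closedBall one_pos x)
  have hsmall : ∀ᶠ t : ℝ in 𝓝 0, ‖t‖₊ * (L * 2) < 1 :=
    (continuous_nnnorm.mul continuous_const).continuousAt.eventually_lt_const (by simp)
  filter_upwards [hsmall] with t ht
  have hbij : Function.Bijective fun x => x + t • h (ballRetract 1 x) :=
    bijective_add_of_lipschitzWith ((lipschitzWith_smul t).comp hk) ht
  have hin : EqOn (fun x => x + t • h (ballRetract 1 x)) (fun x => x + t • h x)
      (Metric.ball 0 1) := fun x hx => by
    simp only [ballRetract_of_norm_le one_pos (mem_ball_zero_iff.1 hx).le]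
  have hout : EqOn (fun x => x + t • h (ballRetract 1 x)) id (Metric.ball 0 1)ᶜ := fun x hx => by
    have hx1 : (1 : ℝ) ≤ ‖x‖ := not_lt.1 fun hlt => hx (mem_ball_zero_iff.2 hlt)
    simp only [h0 _ (mem_sphere_zero_iff_norm.1 (ballRetract_mem_sphere one_pos hx1)), smul_zero,
      add_zero, id]
  exact ⟨hbij.1.injOn.congr hin, by
    rw [← hin.image_eq, image_eq_self_of_eqOn_compl hbij hout]⟩

theorem continuous_det_id_add_smul_fderiv {h : E → E} (hh : ContDiff ℝ 1 h) :
    Continuous fun p : ℝ × E => (ContinuousLinearMap.id ℝ E + p.1 • fderiv ℝ h p.2).det :=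
  ContinuousLinearMap.continuous_det.comp (continuous_const.add
    (continuous_fst.smul ((hh.continuous_fderiv one_ne_zero).comp continuous_snd)))

theorem eventually_det_id_add_smul_fderiv_pos {h : E → E} (hh : ContDiff ℝ 1 h) {K : Set E}
    (hK : IsCompact K) :
    ∀ᶠ t : ℝ in 𝓝 0, ∀ x ∈ K, 0 < (ContinuousLinearMap.id ℝ E + t • fderiv ℝ h x).det := by
  refine hK.eventually_forall_of_forall_eventually fun x _ =>
    (continuous_det_id_add_smul_fderiv hh).continuousAt.eventually_const_lt ?_
  simp [ContinuousLinearMap.det]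

open MeasureTheory

variable [FiniteDimensional ℝ E] [MeasurableSpace E] [BorelSpace E] (μ : Measure E)
  [μ.IsAddHaarMeasure]

theorem setIntegral_det_eq_measureReal_image {s : Set E} (hs : MeasurableSet s)
    {g : E → E} {g' : E → E →L[ℝ] E} (hg' : ∀ x ∈ s, HasFDerivWithinAt g (g' x) s x)
    (hg : InjOn g s) (hpos : ∀ x ∈ s, 0 < (g' x).det) :
    ∫ x in s, (g' x).det ∂μ = μ.real (g '' s) := by
  have hvol := integral_image_eq_integral_abs_det_fderiv_smul μ hs hg' hg fun _ => (1 : ℝ)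
  rw [setIntegral_const, smul_eq_mul, mul_one] at hvol
  rw [hvol]
  exact setIntegral_congr_fun hs fun x hx => by
    rw [abs_of_pos (hpos x hx), smul_eq_mul, mul_one]

theorem eventually_setIntegral_det_id_add_smul_fderiv_eq {h : E → E} (hh : ContDiff ℝ 1 h)
    (h0 : ∀ x, ‖x‖ = 1 → h x = 0) :
    ∀ᶠ t : ℝ in 𝓝 0, ∫ x in Metric.ball (0 : E) 1,
      (ContinuousLinearMap.id ℝ E + t • fderiv ℝ h x).det ∂μ = μ.real (Metric.ball (0 : E) 1) := by
  obtain ⟨L, hL⟩ := (hh.locallyLipschitz.locallyLipschitzOn (s := Metric.closedBall 0 1)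
    ).exists_lipschitzOnWith_of_compact (isCompact_closedBall 0 1)
  filter_upwards [eventually_injOn_and_image_ball_eq hL h0,
    eventually_det_id_add_smul_fderiv_pos hh (isCompact_closedBall 0 1)] with t ⟨hinj, himage⟩ hpos
  have hderiv : ∀ x, HasFDerivAt (fun x => x + t • h x)
      (ContinuousLinearMap.id ℝ E + t • fderiv ℝ h x) x := fun x =>
    (hasFDerivAt_id x).add ((hh.differentiable one_ne_zero x).hasFDerivAt.const_smul t)
  rw [setIntegral_det_eq_measureReal_image μ measurableSet_ball
    (fun x _ => (hderiv x).hasFDerivWithinAt) hinj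
    fun x hx => hpos x (Metric.ball_subset_closedBall hx), himage]

-- The left-hand side, with `t • fderiv ℝ h x` for `fderiv ℝ h x`, is a polynomial in `t`, and it is
-- constant for small `t`.
theorem setIntegral_det_id_add_fderiv_eq {h : E → E} (hh : ContDiff ℝ 1 h)
    (h0 : ∀ x, ‖x‖ = 1 → h x = 0) :
    ∫ x in Metric.ball (0 : E) 1, (ContinuousLinearMap.id ℝ E + fderiv ℝ h x).det ∂μ =
      μ.real (Metric.ball (0 : E) 1) := by
  obtain ⟨s, w, hs, hw⟩ := exists_eval_eq_sum_mul_eval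
    (infinite_of_mem_nhds _ (eventually_setIntegral_det_id_add_smul_fderiv_eq μ hh h0))
    (Module.finrank ℝ E) 1
  have hsum : ∑ t ∈ s, w t = 1 := by
    simpa using (hw 1 (by simp)).symm
  have hdet : ∀ x, (ContinuousLinearMap.id ℝ E + fderiv ℝ h x).det =
      ∑ t ∈ s, w t * (ContinuousLinearMap.id ℝ E + t • fderiv ℝ h x).det := fun x => by
    obtain ⟨p, hp, hpt⟩ := exists_polynomial_eval_eq_det_one_add_smul (fderiv ℝ h x : E →ₗ[ℝ] E)
    have hinterp := hw p hp
    simp only [hpt, one_smul] at hinterp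
    exact hinterp
  have hint : ∀ t ∈ s, Integrable
      (fun x => w t * (ContinuousLinearMap.id ℝ E + t • fderiv ℝ h x).det)
      (μ.restrict (Metric.ball (0 : E) 1)) := fun t _ => by
    have hcont : Continuous fun x =>
        w t * (ContinuousLinearMap.id ℝ E + t • fderiv ℝ h x).det :=
      continuous_const.mul ((continuous_det_id_add_smul_fderiv hh).comp (.prodMk_right t))
    exact (hcont.continuousOn.integrableOn_compact (isCompact_closedBall (0 : E) 1)).mono_set
      Metric.ball_subset_closedBall
  calc ∫ x in Metric.ball (0 : E) 1, (ContinuousLinearMap.id ℝ E + fderiv ℝ h x).det ∂μ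
      = ∑ t ∈ s, w t * ∫ x in Metric.ball (0 : E) 1,
          (ContinuousLinearMap.id ℝ E + t • fderiv ℝ h x).det ∂μ := by
        simp only [hdet, integral_finsetSum s hint, integral_const_mul]
    _ = ∑ t ∈ s, w t * μ.real (Metric.ball (0 : E) 1) :=
        Finset.sum_congr rfl fun t ht => by rw [show _ = _ from hs ht]
    _ = μ.real (Metric.ball (0 : E) 1) := by rw [← Finset.sum_mul, hsum, one_mul]

end Brouwer

section NoRetraction

variable {E : Type*} [NormedAddCommGroup E]

theorem det_eq_zero_of_norm_eq_one [InnerProductSpace ℝ E] [FiniteDimensional ℝ E] {f : E → E}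
    {f' : E →L[ℝ] E} {x : E} (hf : HasFDerivAt f f' x) (hnorm : ∀ y, ‖f y‖ = 1) : f'.det = 0 := by
  by_contra hdet
  obtain ⟨v, hv⟩ := (LinearMap.equivOfDetNeZero (f' : E →ₗ[ℝ] E) hdet).surjective (f x)
  have hconst : HasFDerivAt (fun y => ‖f y‖ ^ 2) (0 : E →L[ℝ] ℝ) x := by
    simpa only [hnorm] using hasFDerivAt_const ((1 : ℝ) ^ 2) x
  have hzero : 2 * inner ℝ (f x) (f' v) = 0 := by
    simpa using congrArg (fun T : E →L[ℝ] ℝ => T v) (hf.norm_sq.unique hconst)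
  rw [show f' v = f x from hv, real_inner_self_eq_norm_sq, hnorm] at hzero
  norm_num at hzero

theorem not_contDiff_retraction_sphere [InnerProductSpace ℝ E] [FiniteDimensional ℝ E]
    [Nontrivial E] {f : E → E} (hf : ContDiff ℝ 1 f) (hnorm : ∀ x, ‖f x‖ = 1) :
    ¬ ∀ x, ‖x‖ = 1 → f x = x := by
  intro hfix
  borelize E
  let μ : MeasureTheory.Measure E := MeasureTheory.Measure.addHaar
  have hderiv : ∀ x, fderiv ℝ (fun y => f y - y) x =
      fderiv ℝ f x - ContinuousLinearMap.id ℝ E := fun x =>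
    ((hf.differentiable one_ne_zero x).hasFDerivAt.sub (hasFDerivAt_id x)).fderiv
  have hvol := setIntegral_det_id_add_fderiv_eq μ (hf.sub contDiff_id)
    fun x hx => sub_eq_zero.2 (hfix x hx)
  simp only [id, hderiv, add_sub_cancel, det_eq_zero_of_norm_eq_one
    (hf.differentiable one_ne_zero _).hasFDerivAt hnorm, MeasureTheory.integral_zero] at hvol
  exact (ENNReal.toReal_pos (Metric.measure_ball_pos μ 0 one_pos).ne'
    MeasureTheory.measure_ball_lt_top.ne).ne hvol

-- Otherwise smooth `F` without changing it far out, and divide by the norm.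
theorem exists_zero_of_eqOn_id_compl_closedBall [InnerProductSpace ℝ E] [FiniteDimensional ℝ E]
    [Nontrivial E] {F : E → E} (hF : Continuous F) {r : ℝ}
    (hid : EqOn F id (Metric.closedBall 0 r)ᶜ) : ∃ x, F x = 0 := by
  by_contra! hne
  let R : ℝ := |r| + 1
  have hR : 0 < R := by positivity
  have hrR : ∀ x : E, R ≤ ‖x‖ → x ∈ (Metric.closedBall (0 : E) r)ᶜ := fun x hx => by
    rw [mem_compl_iff, mem_closedBall_zero_iff, not_le]
    exact ((le_abs_self r).trans_lt (lt_add_one _)).trans_le hx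
  obtain ⟨g, hg, hgF, hgid, -⟩ := hF.exists_contDiff_approx_and_eqOn 1 hF.norm
    (fun x => norm_pos_iff.2 (hne x)) (isClosed_le continuous_const continuous_norm)
    (Metric.isClosed_closedBall.isOpen_compl.mem_nhdsSet.2 hrR) (contDiff_id.contDiffOn.congr hid)
  have hg0 : ∀ x, g x ≠ 0 := fun x hx => by
    simpa only [hx, dist_zero_left, lt_self_iff_false] using hgF x
  refine not_contDiff_retraction_sphere (f := fun x => ‖g (R • x)‖⁻¹ • g (R • x)) ?_
    (fun x => norm_smul_inv_norm (𝕜 := ℝ) (hg0 _)) fun x hx => ?_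
  · have hgR : ContDiff ℝ 1 fun x => g (R • x) := hg.comp (contDiff_id.const_smul R)
    exact ((hgR.norm ℝ fun x => hg0 _).inv fun x => norm_ne_zero_iff.2 (hg0 _)).smul hgR
  · have hnorm : ‖R • x‖ = R := by rw [norm_smul, Real.norm_of_nonneg hR.le, hx, mul_one]
    have hfix : g (R • x) = R • x := (hgid hnorm.ge).trans (hid (hrR _ hnorm.ge))
    rw [hfix, hnorm, inv_smul_smul₀ hR.ne']

theorem exists_zero_of_eventually_eq_id [NormedSpace ℝ E] [FiniteDimensional ℝ E] [Nontrivial E]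
    {F : E → E} (hF : Continuous F) (hid : ∀ᶠ x in Filter.cocompact E, F x = x) :
    ∃ x, F x = 0 := by
  let T := toEuclidean (E := E)
  have : Nontrivial (EuclideanSpace ℝ (Fin (Module.finrank ℝ E))) := T.symm.toEquiv.nontrivial
  have hidT := T.symm.toHomeomorph.isClosedEmbedding.tendsto_cocompact.eventually hid
  rw [← Metric.cobounded_eq_cocompact,
    (Metric.hasBasis_cobounded_compl_closedBall 0).eventually_iff] at hidT
  obtain ⟨r, -, hr⟩ := hidT
  obtain ⟨y, hy⟩ := exists_zero_of_eqOn_id_compl_closedBall (F := fun y => T (F (T.symm y)))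
    (by fun_prop) fun y hy => (congrArg T (hr hy)).trans (T.apply_symm_apply y)
  exact ⟨T.symm y, T.map_eq_zero_iff.1 hy⟩

end NoRetraction

section Extension

variable {E : Type*} [NormedAddCommGroup E] {f f' : E → E}

/-- The restriction of `f` to the unit sphere extends to a nowhere vanishing map on the closed
unit ball, that is, it is inessential as a map to `E ∖ {0}`. The values of `f` off the sphere are
irrelevant. -/
def ExtendsNonvanishing (f : E → E) : Prop :=
  ∃ g : E → E, ContinuousOn g (Metric.closedBall 0 1) ∧
    (∀ x ∈ Metric.closedBall (0 : E) 1, g x ≠ 0) ∧ EqOn g f (Metric.sphere 0 1)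

namespace ExtendsNonvanishing

theorem of_continuousOn (hf : ContinuousOn f (Metric.closedBall 0 1))
    (h0 : ∀ x ∈ Metric.closedBall (0 : E) 1, f x ≠ 0) : ExtendsNonvanishing f :=
  ⟨f, hf, h0, fun _ _ => rfl⟩

theorem congr (h : ExtendsNonvanishing f) (hff' : EqOn f f' (Metric.sphere 0 1)) :
    ExtendsNonvanishing f' :=
  let ⟨g, hg, hg0, hgf⟩ := h
  ⟨g, hg, hg0, hgf.trans hff'⟩

theorem comp_left (h : ExtendsNonvanishing f) {T : E → E} (hT : Continuous T)
    (hT0 : ∀ x, T x = 0 → x = 0) : ExtendsNonvanishing (T ∘ f) :=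
  let ⟨g, hg, hg0, hgf⟩ := h
  ⟨T ∘ g, hT.comp_continuousOn hg, fun x hx hx0 => hg0 x hx (hT0 _ hx0),
    fun _ hx => congrArg T (hgf hx)⟩

variable [NormedSpace ℝ E]

theorem mapsTo_collarCoordinates :
    MapsTo (fun x : E => (2 * ‖x‖ - 1, ‖x‖⁻¹ • x))
      (Metric.closedBall 0 1 \ Metric.ball 0 (1 / 2)) (Icc 0 1 ×ˢ Metric.sphere 0 1) := by
  intro x ⟨hx1, hx2⟩
  rw [mem_closedBall_zero_iff] at hx1
  rw [mem_ball_zero_iff, not_lt] at hx2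
  refine ⟨⟨by linarith, by linarith⟩, ?_⟩
  rw [mem_sphere_zero_iff_norm, norm_smul, norm_inv, norm_norm, inv_mul_cancel₀ (by linarith)]

theorem continuousOn_collarCoordinates :
    ContinuousOn (fun x : E => (2 * ‖x‖ - 1, ‖x‖⁻¹ • x))
      (Metric.closedBall 0 1 \ Metric.ball 0 (1 / 2)) := by
  have hinv : ContinuousOn (fun x : E => ‖x‖⁻¹) (Metric.closedBall 0 1 \ Metric.ball 0 (1 / 2)) :=
    continuous_norm.continuousOn.inv₀ fun x hx => by
      have hx2 : 1 / 2 ≤ ‖x‖ := not_lt.1 fun hlt => hx.2 (mem_ball_zero_iff.2 hlt)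
      positivity
  exact (by fun_prop : Continuous fun x : E => 2 * ‖x‖ - 1).continuousOn.prodMk
    (hinv.smul continuousOn_id)

-- Use the given extension on the ball of radius `1/2` and the homotopy on the remaining collar.
theorem homotopy {H : ℝ → E → E}
    (hH : ContinuousOn (fun p : ℝ × E => H p.1 p.2) (Icc 0 1 ×ˢ Metric.sphere 0 1))
    (hne : ∀ s ∈ Icc (0 : ℝ) 1, ∀ x ∈ Metric.sphere (0 : E) 1, H s x ≠ 0)
    (h0 : EqOn (H 0) f (Metric.sphere 0 1)) (h1 : EqOn (H 1) f' (Metric.sphere 0 1))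
    (h : ExtendsNonvanishing f) : ExtendsNonvanishing f' := by
  obtain ⟨g, hg, hg0, hgf⟩ := h
  have hdouble : MapsTo (fun x : E => (2 : ℝ) • x) (Metric.closedBall 0 (1 / 2))
      (Metric.closedBall 0 1) := fun x hx => by
    rw [mem_closedBall_zero_iff] at hx ⊢
    rw [norm_smul, Real.norm_two]
    linarith
  have hagree : EqOn (fun x : E => g ((2 : ℝ) • x)) (fun x => H (2 * ‖x‖ - 1) (‖x‖⁻¹ • x))
      (Metric.closedBall 0 (1 / 2) ∩ (Metric.closedBall 0 1 \ Metric.ball 0 (1 / 2))) := by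
    rintro x ⟨hx1, -, hx2⟩
    have hx : ‖x‖ = 1 / 2 := le_antisymm (mem_closedBall_zero_iff.1 hx1)
      (not_lt.1 fun hlt => hx2 (mem_ball_zero_iff.2 hlt))
    have hsphere : (2 : ℝ) • x ∈ Metric.sphere (0 : E) 1 := by
      rw [mem_sphere_zero_iff_norm, norm_smul, Real.norm_two, hx, mul_one_div_cancel two_ne_zero]
    have hcoord : 2 * ‖x‖ - 1 = 0 ∧ ‖x‖⁻¹ = 2 := by norm_num [hx]
    simp only [hcoord, hgf hsphere, h0 hsphere]
  obtain ⟨G, hG, hGg, hGH⟩ := exists_continuousOn_union Metric.isClosed_closedBall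
    (Metric.isClosed_closedBall.sdiff Metric.isOpen_ball)
    (hg.comp (continuous_const_smul (2 : ℝ)).continuousOn hdouble)
    (hH.comp continuousOn_collarCoordinates mapsTo_collarCoordinates) hagree
  have hcover : ∀ x ∈ Metric.closedBall (0 : E) 1, x ∈ Metric.closedBall (0 : E) (1 / 2) ∨
      x ∈ Metric.closedBall (0 : E) 1 \ Metric.ball 0 (1 / 2) := fun x hx =>
    (em (x ∈ Metric.ball (0 : E) (1 / 2))).imp (fun h => Metric.ball_subset_closedBall h)
      fun h => ⟨hx, h⟩
  refine ⟨G, hG.mono hcover, fun x hx => ?_, fun x hx => ?_⟩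
  · rcases hcover x hx with hx | hx
    · rw [hGg hx]
      exact hg0 _ (hdouble hx)
    · rw [hGH hx]
      exact hne _ (mapsTo_collarCoordinates hx).1 _ (mapsTo_collarCoordinates hx).2
  · have hx1 : ‖x‖ = 1 := mem_sphere_zero_iff_norm.1 hx
    have hcollar : x ∈ Metric.closedBall (0 : E) 1 \ Metric.ball 0 (1 / 2) :=
      ⟨Metric.sphere_subset_closedBall hx, by rw [mem_ball_zero_iff, hx1]; norm_num⟩
    rw [hGH hcollar]
    simp only [Function.comp_apply, hx1, inv_one, one_smul, ← h1 hx]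
    norm_num

theorem linear_homotopy (hf : ContinuousOn f (Metric.sphere 0 1))
    (hf' : ContinuousOn f' (Metric.sphere 0 1))
    (hne : ∀ s ∈ Icc (0 : ℝ) 1, ∀ x ∈ Metric.sphere (0 : E) 1, (1 - s) • f x + s • f' x ≠ 0)
    (h : ExtendsNonvanishing f) : ExtendsNonvanishing f' := by
  refine h.homotopy (H := fun s x => (1 - s) • f x + s • f' x) ?_ hne (fun x _ => by simp)
    fun x _ => by simp
  have hf₂ : ContinuousOn (fun p : ℝ × E => f p.2) (Icc 0 1 ×ˢ Metric.sphere 0 1) :=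
    hf.comp continuousOn_snd fun p hp => hp.2
  have hf'₂ : ContinuousOn (fun p : ℝ × E => f' p.2) (Icc 0 1 ×ˢ Metric.sphere 0 1) :=
    hf'.comp continuousOn_snd fun p hp => hp.2
  exact ((continuousOn_const.sub continuousOn_fst).smul hf₂).add (continuousOn_fst.smul hf'₂)

theorem not_id [FiniteDimensional ℝ E] [Nontrivial E] : ¬ ExtendsNonvanishing (id : E → E) := by
  rintro ⟨g, hg, hg0, hgid⟩
  have hagree : EqOn g id (Metric.closedBall 0 1 ∩ (Metric.ball 0 1)ᶜ) := fun x hx =>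
    hgid ((Metric.ball_union_sphere.symm.subset hx.1).resolve_left hx.2)
  obtain ⟨F, hF, hFg, hFid⟩ := exists_continuousOn_union Metric.isClosed_closedBall
    Metric.isOpen_ball.isClosed_compl hg continuousOn_id hagree
  have hcover : ∀ x, x ∈ Metric.closedBall (0 : E) 1 ∪ (Metric.ball 0 1)ᶜ := fun x =>
    (em (x ∈ Metric.ball (0 : E) 1)).imp (fun h => Metric.ball_subset_closedBall h) id
  have hid : ∀ᶠ x in Filter.cocompact E, F x = x :=
    Filter.mem_of_superset (isCompact_closedBall (0 : E) 1).compl_mem_cocompact fun x hx =>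
      hFid fun hball => hx (Metric.ball_subset_closedBall hball)
  obtain ⟨x, hx⟩ := exists_zero_of_eventually_eq_id
    (continuousOn_univ.1 (hF.mono fun x _ => hcover x)) hid
  by_cases hx1 : x ∈ Metric.closedBall (0 : E) 1
  · exact hg0 x hx1 ((hFg hx1).symm.trans hx)
  · have hx0 : x = 0 := (hFid fun hball => hx1 (Metric.ball_subset_closedBall hball)).symm.trans hx
    exact hx1 (hx0 ▸ Metric.mem_closedBall_self zero_le_one)

section UniqueZero

variable {F G K : E → E} {q : E}

theorem comp_of_continuousOn (hG : Continuous G) (hG0 : ∀ x, G x ≠ 0)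
    (hK : ContinuousOn K (Metric.sphere 0 1)) : ExtendsNonvanishing (G ∘ K) := by
  have hconst : ExtendsNonvanishing fun _ : E => G 0 :=
    of_continuousOn continuousOn_const fun _ _ => hG0 0
  refine hconst.homotopy (H := fun s x => G (s • K x)) ?_ (fun _ _ _ _ => hG0 _)
    (fun x _ => by simp) fun x _ => by simp
  have hK₂ : ContinuousOn (fun p : ℝ × E => K p.2) (Icc 0 1 ×ˢ Metric.sphere 0 1) :=
    hK.comp continuousOn_snd fun p hp => hp.2
  exact hG.comp_continuousOn (continuousOn_fst.smul hK₂)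

theorem comp_of_dilation (hF : Continuous F) (hF0 : ∀ x, F x = 0 → x = q)
    (hK : ContinuousOn K (Metric.sphere 0 1)) (hKq : ∀ x ∈ Metric.sphere (0 : E) 1, K x ≠ q)
    {m : E → ℝ} (hm : ContinuousOn m (Metric.sphere 0 1))
    (hm0 : ∀ x ∈ Metric.sphere (0 : E) 1, 0 < m x)
    (h : ExtendsNonvanishing (F ∘ fun x => q + m x • (K x - q))) :
    ExtendsNonvanishing (F ∘ K) := by
  refine h.homotopy (H := fun s x => F (q + ((1 - s) * m x + s) • (K x - q))) ?_ ?_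
    (fun x _ => by simp) fun x _ => by simp
  · have hK₂ : ContinuousOn (fun p : ℝ × E => K p.2) (Icc 0 1 ×ˢ Metric.sphere 0 1) :=
      hK.comp continuousOn_snd fun p hp => hp.2
    have hm₂ : ContinuousOn (fun p : ℝ × E => m p.2) (Icc 0 1 ×ˢ Metric.sphere 0 1) :=
      hm.comp continuousOn_snd fun p hp => hp.2
    exact hF.comp_continuousOn (continuousOn_const.add
      ((((continuousOn_const.sub continuousOn_fst).mul hm₂).add continuousOn_fst).smul
        (hK₂.sub continuousOn_const)))
  · intro s hs x hx hzero
    have hfactor : 0 < (1 - s) * m x + s := by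
      rcases hs.1.eq_or_lt with rfl | hs0
      · simpa using hm0 x hx
      · have := mul_nonneg (sub_nonneg.2 hs.2) (hm0 x hx).le
        linarith
    have hq := hF0 _ hzero
    rw [add_eq_left, smul_eq_zero_iff_right hfactor.ne', sub_eq_zero] at hq
    exact hKq x hx hq

-- Dilating from `q` pushes `K` homotopically out of the unit ball, where `F` may be replaced by
-- the nowhere vanishing `G`.
theorem comp_of_eq_off_ball (hF : Continuous F) (hF0 : ∀ x, F x = 0 → x = q) (hG : Continuous G)
    (hG0 : ∀ x, G x ≠ 0) (hFG : ∀ x, 1 ≤ ‖x‖ → F x = G x) (hK : ContinuousOn K (Metric.sphere 0 1))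
    (hKq : ∀ x ∈ Metric.sphere (0 : E) 1, K x ≠ q) : ExtendsNonvanishing (F ∘ K) := by
  have hpos : ∀ x ∈ Metric.sphere (0 : E) 1, 0 < ‖K x - q‖ := fun x hx =>
    norm_pos_iff.2 (sub_ne_zero.2 (hKq x hx))
  have hm : ContinuousOn (fun x => (1 + ‖q‖) / ‖K x - q‖) (Metric.sphere (0 : E) 1) :=
    continuousOn_const.div (hK.sub continuousOn_const).norm fun x hx => (hpos x hx).ne'
  have hout : ∀ x ∈ Metric.sphere (0 : E) 1, 1 ≤ ‖q + ((1 + ‖q‖) / ‖K x - q‖) • (K x - q)‖ := by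
    intro x hx
    have hnorm : ‖((1 + ‖q‖) / ‖K x - q‖) • (K x - q)‖ = 1 + ‖q‖ := by
      rw [norm_smul, norm_div, norm_norm, Real.norm_of_nonneg (by positivity),
        div_mul_cancel₀ _ (hpos x hx).ne']
    have htriangle := norm_sub_le (q + ((1 + ‖q‖) / ‖K x - q‖) • (K x - q)) q
    rw [add_sub_cancel_left, hnorm] at htriangle
    linarith
  refine comp_of_dilation hF hF0 hK hKq hm (fun x hx => div_pos (by positivity) (hpos x hx)) ?_
  exact (comp_of_continuousOn hG hG0 (K := fun x => q + ((1 + ‖q‖) / ‖K x - q‖) • (K x - q))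
    (continuousOn_const.add (hm.smul (hK.sub continuousOn_const)))).congr fun x hx =>
      (hFG _ (hout x hx)).symm

theorem comp_of_unique_zero (hF : ContinuousOn F (Metric.closedBall 0 1)) (hq : ‖q‖ < 1)
    (hF0 : ∀ x ∈ Metric.closedBall (0 : E) 1, F x = 0 → x = q) (hext : ExtendsNonvanishing F)
    (hK : ContinuousOn K (Metric.sphere 0 1))
    (hKball : MapsTo K (Metric.sphere 0 1) (Metric.closedBall 0 1))
    (hKq : ∀ x ∈ Metric.sphere (0 : E) 1, K x ≠ q) : ExtendsNonvanishing (F ∘ K) := by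
  obtain ⟨g, hg, hg0, hgF⟩ := hext
  have hball := ballRetract_mem_closedBall (E := E) one_pos
  have hcont := continuous_ballRetract (E := E) one_pos
  refine (comp_of_eq_off_ball (hF.comp_continuous hcont hball) (q := q) (fun x hx => ?_)
    (hg.comp_continuous hcont hball) (fun x => hg0 _ (hball x))
    (fun x hx => (hgF (ballRetract_mem_sphere one_pos hx)).symm) hK hKq).congr fun x hx => ?_
  · have hxq := hF0 _ (hball x) hx
    rcases le_total ‖x‖ 1 with h | h
    · rwa [ballRetract_of_norm_le one_pos h] at hxq
    · have hnorm := mem_sphere_zero_iff_norm.1 (ballRetract_mem_sphere one_pos h)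
      exact absurd (hxq ▸ hnorm) hq.ne
  · exact congrArg F (ballRetract_of_norm_le one_pos (mem_closedBall_zero_iff.1 (hKball hx)))

end UniqueZero

theorem half_smul_add_mem_closedBall {a a' w y : E} {r : ℝ}
    (ha : a ∈ Metric.closedBall y (r / 2)) (ha' : a' ∈ Metric.closedBall y (r / 2)) (hw : ‖w‖ ≤ r) :
    (1 / 2 : ℝ) • (a + a' + w) ∈ Metric.closedBall y r := by
  rw [mem_closedBall_iff_norm] at ha ha' ⊢
  have hsum : (1 / 2 : ℝ) • (a + a' + w) - y = (1 / 2 : ℝ) • ((a - y) + (a' - y) + w) := by module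
  rw [hsum, norm_smul, Real.norm_of_nonneg (by norm_num)]
  linarith [norm_add₃_le (a := a - y) (b := a' - y) (c := w)]

-- If `g` extends `p - p'`, and is cut off so that `‖g‖ ≤ r`, then
-- `θ ((p + p' + g) / 2) - θ ((p + p' - g) / 2)` extends `θ ∘ p - θ ∘ p'`.
theorem sub_comp_of_injOn {θ p p' : E → E} {y : E} {r : ℝ} (hr : 0 < r)
    (hθ : ContinuousOn θ (Metric.closedBall y r)) (hinj : InjOn θ (Metric.closedBall y r))
    (hp : ContinuousOn p (Metric.closedBall 0 1)) (hp' : ContinuousOn p' (Metric.closedBall 0 1))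
    (hpy : MapsTo p (Metric.closedBall 0 1) (Metric.closedBall y (r / 2)))
    (hpy' : MapsTo p' (Metric.closedBall 0 1) (Metric.closedBall y (r / 2)))
    (h : ExtendsNonvanishing fun u => p u - p' u) :
    ExtendsNonvanishing fun u => θ (p u) - θ (p' u) := by
  obtain ⟨g, hg, hg0, hgp⟩ := h
  let w : E → E := fun u => ballRetract r (g u)
  have hw : ContinuousOn w (Metric.closedBall 0 1) :=
    (continuous_ballRetract hr).comp_continuousOn hg
  have hwr : ∀ u, ‖w u‖ ≤ r := fun u =>
    mem_closedBall_zero_iff.1 (ballRetract_mem_closedBall hr (g u))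
  have hplus : MapsTo (fun u => (1 / 2 : ℝ) • (p u + p' u + w u)) (Metric.closedBall 0 1)
      (Metric.closedBall y r) := fun u hu =>
    half_smul_add_mem_closedBall (hpy hu) (hpy' hu) (hwr u)
  have hminus : MapsTo (fun u => (1 / 2 : ℝ) • (p u + p' u + -w u)) (Metric.closedBall 0 1)
      (Metric.closedBall y r) := fun u hu =>
    half_smul_add_mem_closedBall (hpy hu) (hpy' hu) ((norm_neg _).trans_le (hwr u))
  refine ⟨fun u => θ ((1 / 2 : ℝ) • (p u + p' u + w u)) - θ ((1 / 2 : ℝ) • (p u + p' u + -w u)),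
    (hθ.comp (((hp.add hp').add hw).const_smul _) hplus).sub
      (hθ.comp (((hp.add hp').add hw.neg).const_smul _) hminus), fun u hu hzero => ?_,
    fun u hu => ?_⟩
  · have heq := hinj (hplus hu) (hminus hu) (sub_eq_zero.1 hzero)
    have hwu : w u = 0 := by
      have hdiff : w u = (1 / 2 : ℝ) • (p u + p' u + w u) - (1 / 2 : ℝ) • (p u + p' u + -w u) := by
        module
      exact hdiff.trans (sub_eq_zero.2 heq)
    exact hg0 u hu ((ballRetract_eq_zero_iff hr).1 hwu)
  · have hu' := Metric.sphere_subset_closedBall hu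
    have hdist : ‖p u - p' u‖ ≤ r := by
      rw [← dist_eq_norm]
      linarith [dist_triangle_right (p u) (p' u) y, Metric.mem_closedBall.1 (hpy hu'),
        Metric.mem_closedBall.1 (hpy' hu')]
    have hwu : w u = p u - p' u := by
      simp only [w, hgp hu, ballRetract_of_norm_le hr hdist]
    simp only [hwu]
    congr 2 <;> module

theorem not_sub_of_injOn [FiniteDimensional ℝ E] [Nontrivial E] {θ p p' : E → E} {y : E} {r : ℝ}
    (hr : 0 < r) (hθ : ContinuousOn θ (Metric.closedBall y r))
    (hinj : InjOn θ (Metric.closedBall y r))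
    (hp : ContinuousOn p (Metric.closedBall 0 1)) (hp' : ContinuousOn p' (Metric.closedBall 0 1))
    (hpy : MapsTo p (Metric.closedBall 0 1) (Metric.closedBall y (r / 2)))
    (hpy' : MapsTo p' (Metric.closedBall 0 1) (Metric.closedBall y (r / 2)))
    (L : E ≃L[ℝ] E) (hL : ∀ u ∈ Metric.sphere (0 : E) 1, θ (p u) - θ (p' u) = L u) :
    ¬ ExtendsNonvanishing fun u => p u - p' u := fun h =>
  not_id <| ((sub_comp_of_injOn hr hθ hinj hp hp' hpy hpy' h).comp_left L.symm.continuous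
    fun _ hx => L.symm.map_eq_zero_iff.1 hx).congr fun u hu => by
      simp only [Function.comp_apply, hL u hu, L.symm_apply_apply, id]

end ExtendsNonvanishing

end Extension

section Winding

theorem exists_lift_add_two_pi (f : C(Circle, Circle)) :
    ∃ (n : ℤ) (F : C(ℝ, ℝ)), (∀ t, Circle.exp (F t) = f (Circle.exp t)) ∧
      ∀ t, F (t + 2 * Real.pi) = F t + n * (2 * Real.pi) := by
  obtain ⟨x₀, hx₀⟩ := Circle.exp_surjective (f (Circle.exp 0))
  obtain ⟨F, ⟨-, hFf⟩, -⟩ := Circle.isCoveringMap_exp.existsUnique_continuousMap_lifts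
    (f.comp Circle.exp) 0 x₀ hx₀
  have hF : ∀ t, Circle.exp (F t) = f (Circle.exp t) := congrFun hFf
  have hexp : ∀ t : ℝ, Circle.exp (F (t + 2 * Real.pi)) = Circle.exp (F t) := fun t => by
    rw [hF, hF, Circle.exp_add_two_pi]
  have hconst : ∀ t, F (t + 2 * Real.pi) - F t = F (0 + 2 * Real.pi) - F 0 := fun t =>
    Circle.isCoveringMap_exp.const_of_comp (g := fun t => F (t + 2 * Real.pi) - F t)
      (by fun_prop) (fun a a' => by simp only [Circle.exp_sub, hexp, div_self']) t 0
  obtain ⟨n, hn⟩ := Circle.exp_eq_exp.1 (hexp 0)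
  exact ⟨n, F, hF, fun t => by linarith [hconst t]⟩

theorem exists_zpow_mul_exp (f : C(Circle, Circle)) :
    ∃ (n : ℤ) (h : C(Circle, ℝ)), ∀ z, f z = z ^ n * Circle.exp (h z) := by
  obtain ⟨n, F, hF, hadd⟩ := exists_lift_add_two_pi f
  let P : C(ℝ, ℝ) := ⟨fun t => F t - n * t, by fun_prop⟩
  have hP : Function.Periodic P (2 * Real.pi) := fun t => by
    simp only [P, ContinuousMap.coe_mk, hadd]
    ring
  have hfactors : Function.FactorsThrough P Circle.exp := by
    intro a b hab
    obtain ⟨k, rfl⟩ := Circle.exp_eq_exp.1 hab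
    exact hP.int_mul k b
  have hquot : IsQuotientMap Circle.exp :=
    Circle.isCoveringMap_exp.isQuotientMap Circle.exp_surjective
  refine ⟨n, hquot.lift P hfactors, fun z => ?_⟩
  obtain ⟨t, rfl⟩ := Circle.exp_surjective z
  have hlift : hquot.lift P hfactors (Circle.exp t) = F t - n * t :=
    DFunLike.congr_fun (hquot.lift_comp P hfactors) t
  rw [← hF, hlift, ← Circle.exp_zsmul, ← Circle.exp_add, zsmul_eq_mul, add_sub_cancel]

theorem lt_of_sin_nonpos {u : ℝ → ℝ} {c : ℝ} (hc : 0 ≤ c) (hu : ContinuousOn u (Icc 0 c))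
    (hsin : ∀ τ ∈ Icc 0 c, Real.sin (u τ) ≤ 0) {a b : ℤ}
    (ha : u 0 = Real.pi + a * (2 * Real.pi)) (hb : u c = b * (2 * Real.pi)) : a < b := by
  by_contra! hab
  have hab' : (b : ℝ) * (2 * Real.pi) ≤ a * (2 * Real.pi) := by gcongr
  obtain ⟨τ, hτ, heq⟩ := intermediate_value_Icc' hc hu
    (show Real.pi / 2 + a * (2 * Real.pi) ∈ Icc (u c) (u 0) by
      rw [ha, hb]
      constructor <;> linarith [Real.pi_pos])
  have hτsin := hsin τ hτ
  rw [heq, Real.sin_add_int_mul_two_pi, Real.sin_pi_div_two] at hτsin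
  norm_num at hτsin

section Log

variable {G Λ : C(ℝ × ℝ, ℂ)}

theorem exists_continuousMap_cexp_eq (hG : ∀ p, G p ≠ 0) :
    ∃ Λ : C(ℝ × ℝ, ℂ), ∀ p, Complex.exp (Λ p) = G p :=
  let ⟨Λ, ⟨_, hΛ⟩, _⟩ := Complex.isCoveringMapOn_exp.existsUnique_continuousMap_lifts G
    (a₀ := 0) (Complex.exp_log (hG 0)) hG
  ⟨Λ, congrFun hΛ⟩

theorem log_eq_of_eq_const (hΛ : ∀ p, Complex.exp (Λ p) = G p) {c : ℝ} {w : ℂ}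
    (hc : ∀ s, G (s, c) = w) (s : ℝ) : Λ (s, c) = Λ (0, c) :=
  Complex.isCoveringMap_exp.const_of_comp (g := fun s => Λ (s, c)) (by fun_prop)
    (fun a a' => Subtype.ext (by simp only [hΛ, hc])) s 0

end Log

theorem exists_im_eq_of_cexp_eq_pos {z : ℂ} {r : ℝ} (hr : 0 < r) (h : Complex.exp z = r) :
    ∃ b : ℤ, z.im = b * (2 * Real.pi) := by
  rw [← Real.exp_log hr, Complex.ofReal_exp] at h
  obtain ⟨b, hb⟩ := Complex.exp_eq_exp_iff_exists_int.1 h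
  exact ⟨b, by simp [hb]⟩

theorem exists_im_eq_of_cexp_eq_neg {z : ℂ} {r : ℝ} (hr : 0 < r) (h : Complex.exp z = -r) :
    ∃ a : ℤ, z.im = Real.pi + a * (2 * Real.pi) := by
  obtain ⟨a, ha⟩ := exists_im_eq_of_cexp_eq_pos (z := z - Real.pi * Complex.I) hr
    (by rw [Complex.exp_sub_pi_mul_I, h, neg_neg])
  exact ⟨a, by simpa [sub_eq_iff_eq_add'] using ha⟩

section Curve

variable {n : ℤ} {x y : C(ℝ, ℝ)}

theorem not_add_two_pi_and_eq (hn : 2 ≤ n)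
    (hx : ∀ t, x (t + 2 * Real.pi) = x t + n * (2 * Real.pi))
    (hinj : ∀ s t, Circle.exp (x s) = Circle.exp (x t) → y s = y t → Circle.exp s = Circle.exp t)
    (s t : ℝ) : ¬ (x t = x s + 2 * Real.pi ∧ y t = y s) := by
  rintro ⟨hxt, hyt⟩
  obtain ⟨k, rfl⟩ := Circle.exp_eq_exp.1
    (hinj t s (by rw [hxt, Circle.exp_add_two_pi]) hyt)
  have hper : Function.Periodic (fun t => x t - n * t) (2 * Real.pi) := fun t => by
    simp only [hx]
    ring
  have hk := hper.int_mul k s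
  have hmul : ((n * k : ℤ) : ℝ) * (2 * Real.pi) = ((1 : ℤ) : ℝ) * (2 * Real.pi) := by
    push_cast
    linarith
  have hunit := Int.eq_one_or_neg_one_of_mul_eq_one
    (Int.cast_injective (mul_right_cancel₀ Real.two_pi_pos.ne' hmul))
  omega

-- `(s, τ) ↦ γ (s + τ) - γ s - 2π` never vanishes for the lifted curve `γ = x + i y`. For fixed `s`
-- its argument runs over `0 ≤ τ ≤ 2π` from the negative to the positive real half-axis, by an
-- amount independent of `s`; but it avoids the upper half-plane where `y` is maximal at `s` and
-- the lower one where `y` is minimal.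
theorem lt_two_of_lift_injective (hx : ∀ t, x (t + 2 * Real.pi) = x t + n * (2 * Real.pi))
    (hy : Function.Periodic y (2 * Real.pi))
    (hinj : ∀ s t, Circle.exp (x s) = Circle.exp (x t) → y s = y t → Circle.exp s = Circle.exp t) :
    n < 2 := by
  by_contra! hn
  let G : C(ℝ × ℝ, ℂ) := ⟨fun p => ⟨x (p.1 + p.2) - x p.1 - 2 * Real.pi, y (p.1 + p.2) - y p.1⟩, by
    simp only [Complex.mk_eq_add_mul_I]
    fun_prop⟩
  have hG : ∀ p, G p ≠ 0 := fun p h0 => not_add_two_pi_and_eq hn hx hinj p.1 (p.1 + p.2)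
    ⟨by linarith [show x (p.1 + p.2) - x p.1 - 2 * Real.pi = 0 from congrArg Complex.re h0],
      sub_eq_zero.1 (congrArg Complex.im h0)⟩
  obtain ⟨Λ, hΛ⟩ := exists_continuousMap_cexp_eq hG
  have him : ∀ p, Real.exp (Λ p).re * Real.sin (Λ p).im = y (p.1 + p.2) - y p.1 :=
    fun p => by rw [← Complex.exp_im, hΛ]; rfl
  have hG0 : ∀ s, G (s, 0) = -((2 * Real.pi : ℝ) : ℂ) := fun s =>
    Complex.ext (by simp [G]) (by simp [G])
  have hG1 : ∀ s, G (s, 2 * Real.pi) = (((n - 1) * (2 * Real.pi) : ℝ) : ℂ) := fun s =>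
    Complex.ext (by simp [G, hx]; ring) (by simp [G, hy s])
  obtain ⟨a, ha⟩ := exists_im_eq_of_cexp_eq_neg Real.two_pi_pos ((hΛ (0, 0)).trans (hG0 0))
  have hn1 : (0 : ℝ) < n - 1 := sub_pos.2 (by exact_mod_cast (by lia : 1 < n))
  obtain ⟨b, hb⟩ := exists_im_eq_of_cexp_eq_pos (mul_pos hn1 Real.two_pi_pos)
    ((hΛ (0, 2 * Real.pi)).trans (hG1 0))
  have hcompact := hy.compact_of_continuous Real.two_pi_pos.ne' y.continuous
  obtain ⟨_, ⟨s₁, rfl⟩, hs₁⟩ := hcompact.exists_isGreatest (range_nonempty y)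
  obtain ⟨_, ⟨s₂, rfl⟩, hs₂⟩ := hcompact.exists_isLeast (range_nonempty y)
  have hsin₁ : ∀ τ, Real.sin (Λ (s₁, τ)).im ≤ 0 := fun τ => nonpos_of_mul_nonpos_right
    ((him (s₁, τ)).trans_le (sub_nonpos.2 (hs₁ (mem_range_self _)))) (Real.exp_pos _)
  have hsin₂ : ∀ τ, 0 ≤ Real.sin (Λ (s₂, τ)).im := fun τ => nonneg_of_mul_nonneg_right
    ((sub_nonneg.2 (hs₂ (mem_range_self _))).trans_eq (him (s₂, τ)).symm) (Real.exp_pos _)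
  have hab : a < b := lt_of_sin_nonpos (u := fun τ => (Λ (s₁, τ)).im) Real.two_pi_pos.le
    (by fun_prop) (fun τ _ => hsin₁ τ) (by rw [log_eq_of_eq_const hΛ hG0, ha])
    (by rw [log_eq_of_eq_const hΛ hG1, hb])
  have hba : -1 - a < -b := lt_of_sin_nonpos (u := fun τ => -(Λ (s₂, τ)).im) Real.two_pi_pos.le
    (by fun_prop) (fun τ _ => by simpa only [Real.sin_neg, neg_nonpos] using hsin₂ τ)
    (by rw [log_eq_of_eq_const hΛ hG0, ha]; push_cast; ring)
    (by rw [log_eq_of_eq_const hΛ hG1, hb]; push_cast; ring)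
  lia

end Curve

theorem lt_two_of_injective {n : ℤ} {h y : C(Circle, ℝ)}
    (hinj : Function.Injective fun z : Circle => (z ^ n * Circle.exp (h z), y z)) : n < 2 := by
  refine lt_two_of_lift_injective (x := ⟨fun t => n * t + h (Circle.exp t), by fun_prop⟩)
    (y := y.comp Circle.exp) (fun t => ?_) (fun t => ?_) fun s t hx hy => hinj (Prod.ext ?_ hy)
  · simp only [ContinuousMap.coe_mk, Circle.exp_add_two_pi]
    ring
  · exact congrArg y (Circle.exp_add_two_pi t)
  · simpa only [ContinuousMap.coe_mk, Circle.exp_add, ← zsmul_eq_mul, Circle.exp_zsmul] using hx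

theorem natAbs_lt_two_of_injective {n : ℤ} {h y : C(Circle, ℝ)}
    (hinj : Function.Injective fun z : Circle => (z ^ n * Circle.exp (h z), y z)) :
    n.natAbs < 2 := by
  have hpos := lt_two_of_injective hinj
  have hneg := lt_two_of_injective (n := -n) (h := ⟨fun z => h z⁻¹, by fun_prop⟩)
    (y := ⟨fun z => y z⁻¹, by fun_prop⟩) (by
      simpa only [inv_zpow', neg_neg, ContinuousMap.coe_mk, Function.comp_def] using
        hinj.comp inv_injective)
  lia

theorem exists_zpow_mul_exp_of_injective {f : C(Circle, Circle)} {y : C(Circle, ℝ)}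
    (hinj : Function.Injective fun z : Circle => (f z, y z)) :
    ∃ (n : ℤ) (h : C(Circle, ℝ)), n.natAbs < 2 ∧ ∀ z, f z = z ^ n * Circle.exp (h z) := by
  obtain ⟨n, h, hf⟩ := exists_zpow_mul_exp f
  exact ⟨n, h, natAbs_lt_two_of_injective (h := h) (y := y) (by simpa only [hf] using hinj), hf⟩

end Winding

section Separation

theorem mem_sphere_prod_iff {p : ℂ × ℝ} : p ∈ Metric.sphere (0 : ℂ × ℝ) 1 ↔
    ‖p.1‖ = 1 ∧ |p.2| ≤ 1 ∨ ‖p.1‖ ≤ 1 ∧ |p.2| = 1 := by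
  rw [mem_sphere_zero_iff_norm, Prod.norm_def, Real.norm_eq_abs]
  grind

theorem mem_closedBall_prod_iff {p : ℂ × ℝ} : p ∈ Metric.closedBall (0 : ℂ × ℝ) 1 ↔
    ‖p.1‖ ≤ 1 ∧ |p.2| ≤ 1 := by
  rw [mem_closedBall_zero_iff, Prod.norm_def, Real.norm_eq_abs, max_le_iff]

-- Untwist `exp (k d)` to `1` and reflect the last coordinate.
theorem not_extendsNonvanishing_mul_exp_neg (k : C(ℂ, ℝ)) :
    ¬ ExtendsNonvanishing fun u : ℂ × ℝ => ((u.1 * Circle.exp (k u.1), -u.2) : ℂ × ℝ) := by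
  intro h
  have huntwist : ExtendsNonvanishing fun u : ℂ × ℝ => ((u.1, -u.2) : ℂ × ℝ) := by
    refine h.homotopy (H := fun s u => ((u.1 * Circle.exp ((1 - s) * k u.1), -u.2) : ℂ × ℝ))
      (by fun_prop) (fun s _ u hu h0 => ?_) (fun u _ => by simp) fun u _ => by simp
    rw [Prod.mk_eq_zero, mul_eq_zero, or_iff_left (Circle.coe_ne_zero _), neg_eq_zero] at h0
    exact zero_ne_one (((mem_sphere_zero_iff_norm.1 hu).symm.trans
      (congrArg norm (Prod.ext h0.1 h0.2 : u = 0))).trans norm_zero).symm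
  refine ExtendsNonvanishing.not_id (E := ℂ × ℝ) ((huntwist.comp_left
    (T := fun u => (u.1, -u.2)) (by fun_prop) fun u hu => ?_).congr fun u _ => by simp)
  exact Prod.ext (Prod.mk_eq_zero.1 hu).1 (neg_eq_zero.1 (Prod.mk_eq_zero.1 hu).2)

theorem convexComb_sub_ne_zero {E : Type*} [NormedAddCommGroup E] [NormedSpace ℝ E] {a b : E}
    (ha : ‖a‖ ≤ 1) (hb : ‖b‖ = 1) {s : ℝ} (hs0 : 0 < s) (hs1 : s ≤ 1) :
    (1 - s) • (b - a) + s • b ≠ 0 := by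
  intro h
  have hba : b - (1 - s) • a = 0 := by
    rw [← h]
    module
  have hnorm := congrArg norm (sub_eq_zero.1 hba)
  rw [hb, norm_smul, Real.norm_of_nonneg (sub_nonneg.2 hs1)] at hnorm
  nlinarith [norm_nonneg a]

theorem exists_disc_eq_path {μ : ℂ → ℂ × ℝ} (hμ : Continuous μ)
    (hμm : ∀ d ∈ Metric.closedBall (0 : ℂ) 1, (μ d).2 ∈ Ioo (0 : ℝ) 1) (h : C(Circle, ℝ))
    (hbd : ∀ z : Circle, (μ z).1 = z * Circle.exp (h z)) {p : ℝ → ℂ × ℝ} (hp : Continuous p)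
    (hp1 : ∀ t, ‖(p t).1‖ ≤ 1) (hbot : (p (-1)).2 ≤ 0) (htop : 1 ≤ (p 1).2) :
    ∃ d ∈ Metric.closedBall (0 : ℂ) 1, ∃ t ∈ Icc (-1 : ℝ) 1, μ d = p t := by
  by_contra! hne
  have hcirc : IsClosedEmbedding fun z : Circle => (z : ℂ) :=
    (by fun_prop : Continuous fun z : Circle => (z : ℂ)).isClosedEmbedding Circle.coe_injective
  obtain ⟨k, hk⟩ := ContinuousMap.exists_extension hcirc h
  have hbd' : ∀ d : ℂ, ‖d‖ = 1 → (μ d).1 = d * Circle.exp (k d) := fun d hd => by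
    obtain ⟨z, rfl⟩ : ∃ z : Circle, (z : ℂ) = d := ⟨⟨d, mem_sphere_zero_iff_norm.2 hd⟩, rfl⟩
    rw [hbd, ← hk]
    rfl
  have hdiff : ∀ u ∈ Metric.closedBall (0 : ℂ × ℝ) 1, μ u.1 - p u.2 ≠ 0 := fun u hu =>
    sub_ne_zero.2 (hne _ (mem_closedBall_zero_iff.2 (mem_closedBall_prod_iff.1 hu).1) _
      (abs_le.1 (mem_closedBall_prod_iff.1 hu).2))
  refine not_extendsNonvanishing_mul_exp_neg k
    ((ExtendsNonvanishing.of_continuousOn (by fun_prop) hdiff).linear_homotopy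
      (by fun_prop) (by fun_prop) ?_)
  rintro s ⟨hs0, hs1⟩ ⟨d, t⟩ hu hzero
  rcases hs0.eq_or_lt with rfl | hs
  · exact hdiff _ (Metric.sphere_subset_closedBall hu) (by simpa using hzero)
  rcases mem_sphere_prod_iff.1 hu with ⟨hd, -⟩ | ⟨hd, ht⟩
  · refine convexComb_sub_ne_zero (hp1 t) (b := (μ d).1) ?_ hs hs1 ?_
    · rw [hbd' d hd, norm_mul, hd, Circle.norm_coe, mul_one]
    · rw [hbd' d hd]
      simpa [hbd' d hd] using congrArg Prod.fst hzero
  · have hheight : (1 - s) * ((μ d).2 - (p t).2) + s * -t = 0 := congrArg Prod.snd hzero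
    have hd' := hμm d (mem_closedBall_zero_iff.2 hd)
    rcases eq_or_eq_neg_of_abs_eq ht with rfl | rfl
    · nlinarith [hd'.2]
    · nlinarith [hd'.1]

end Separation

section Partition

theorem eventually_joinedIn_diff {E : Type*} [NormedAddCommGroup E] [NormedSpace ℝ E]
    {W S : Set E} (hW : Convex ℝ W) (hS : IsClosed S) {x : E} (hx : x ∈ W \ S) :
    ∀ᶠ y in 𝓝[W] x, JoinedIn (W \ S) x y := by
  obtain ⟨ε, hε, hball⟩ := Metric.isOpen_iff.1 hS.isOpen_compl x hx.2
  filter_upwards [self_mem_nhdsWithin, mem_nhdsWithin_of_mem_nhds (Metric.ball_mem_nhds x hε)]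
    with y hy hyx
  exact JoinedIn.of_segment_subset fun z hz => ⟨hW.segment_subset hx.1 hy hz,
    hball ((convex_ball x ε).segment_subset (Metric.mem_ball_self hε) hyx hz)⟩

theorem exists_isClosed_partition {E : Type*} [NormedAddCommGroup E] [NormedSpace ℝ E]
    {W S T V : Set E} (hW : Convex ℝ W) (hWc : IsClosed W) (hS : IsClosed S) (hSW : S ⊆ W)
    (hT : T ⊆ W \ S) (hV : V ⊆ W) (hTV : ∀ x ∈ T, ∀ y ∈ V, ¬ JoinedIn (W \ S) x y) :
    ∃ P N : Set E, IsClosed P ∧ IsClosed N ∧ P ∪ N = W ∧ P ∩ N = S ∧ T ⊆ P ∧ V ⊆ N := by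
  let P₀ : Set E := {y | ∃ x ∈ T, JoinedIn (W \ S) x y}
  have hP₀ : P₀ ⊆ W \ S := fun y ⟨x, _, hxy⟩ => hxy.target_mem
  have hlocal : ∀ x ∈ W \ S, ∀ᶠ y in 𝓝[W] x, (x ∈ P₀ ↔ y ∈ P₀) := fun x hx =>
    (eventually_joinedIn_diff hW hS hx).mono fun y hxy =>
      ⟨fun ⟨a, ha, hax⟩ => ⟨a, ha, hax.trans hxy⟩, fun ⟨a, ha, hay⟩ => ⟨a, ha, hay.trans hxy.symm⟩⟩
  have hexists : ∀ Q ⊆ W, ∀ x ∈ closure Q, x ∉ S → ∃ y ∈ Q, x ∈ P₀ ↔ y ∈ P₀ := by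
    intro Q hQ x hxQ hxS
    have := mem_closure_iff_nhdsWithin_neBot.1 hxQ
    have hlocalQ : ∀ᶠ y in 𝓝[Q] x, (x ∈ P₀ ↔ y ∈ P₀) :=
      nhdsWithin_mono x hQ (hlocal x ⟨closure_minimal hQ hWc hxQ, hxS⟩)
    obtain ⟨y, hiff, hy⟩ := (hlocalQ.and self_mem_nhdsWithin).exists
    exact ⟨y, hy, hiff⟩
  have hP : IsClosed (P₀ ∪ S) := by
    rw [← closure_subset_iff_isClosed, closure_union, hS.closure_eq]
    rintro x (hx | hx)
    · by_cases hxS : x ∈ S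
      · exact Or.inr hxS
      obtain ⟨y, hy, hiff⟩ := hexists P₀ (fun y hy => (hP₀ hy).1) x hx hxS
      exact Or.inl (hiff.2 hy)
    · exact Or.inr hx
  have hN : IsClosed (W \ P₀) := by
    rw [← closure_subset_iff_isClosed]
    intro x hx
    refine ⟨closure_minimal sdiff_subset hWc hx, fun hxP => ?_⟩
    obtain ⟨y, hy, hiff⟩ := hexists (W \ P₀) sdiff_subset x hx (hP₀ hxP).2
    exact hy.2 (hiff.1 hxP)
  refine ⟨P₀ ∪ S, W \ P₀, hP, hN, ?_, ?_, fun x hx => Or.inl ⟨x, hx, JoinedIn.refl (hT hx)⟩,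
    fun y hy => ⟨hV hy, fun ⟨x, hx, hxy⟩ => hTV x hx y hy hxy⟩⟩
  · ext x
    have := @hP₀ x
    have := @hSW x
    grind
  · ext x
    have := @hP₀ x
    have := @hSW x
    grind

theorem subset_of_isPreconnected_of_isClosed_partition {E : Type*} [TopologicalSpace E]
    {P N Z : Set E} (hZ : IsPreconnected Z) (hP : IsClosed P) (hN : IsClosed N)
    (hZsub : Z ⊆ P ∪ N) (hdisj : Disjoint Z (P ∩ N)) (hmeet : (Z ∩ P).Nonempty) : Z ⊆ P := by
  intro z hz
  by_contra hzP
  obtain ⟨y, hyZ, hy⟩ := isPreconnected_closed_iff.1 hZ P N hP hN hZsub hmeet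
    ⟨z, hz, (hZsub hz).resolve_left hzP⟩
  exact disjoint_left.1 hdisj hyZ hy

theorem forall_mem_of_isClosed_partition {E : Type*} [TopologicalSpace E] {P N : Set E}
    (hP : IsClosed P) (hN : IsClosed N) {e : unitInterval → E} (he : Continuous e)
    (hsub : ∀ t, e t ∈ P ∪ N) (h0 : e 0 ∈ P) (h1 : e 1 ∈ P)
    (honce : {t | e t ∈ P ∩ N}.Subsingleton) (t : unitInterval) : e t ∈ P := by
  by_cases ht : e t ∈ P ∩ N
  · exact ht.1
  have hmem : ∀ J : Set unitInterval, IsPreconnected J → t ∈ J → (∀ s ∈ J, e s ∉ P ∩ N) →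
      (∃ s ∈ J, e s ∈ P) → e t ∈ P := fun J hJ htJ havoid ⟨s, hs, hsP⟩ =>
    subset_of_isPreconnected_of_isClosed_partition (hJ.image e he.continuousOn) hP hN
      (image_subset_iff.2 fun s _ => hsub s)
      (disjoint_left.2 (forall_mem_image.2 havoid)) ⟨e s, mem_image_of_mem e hs, hsP⟩
      (mem_image_of_mem e htJ)
  by_cases hleft : ∀ s ∈ Iic t, e s ∉ P ∩ N
  · exact hmem (Iic t) ordConnected_Iic.isPreconnected self_mem_Iic hleft
      ⟨0, unitInterval.nonneg t, h0⟩
  · push Not at hleft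
    obtain ⟨s, hst, hs⟩ := hleft
    refine hmem (Ici t) ordConnected_Ici.isPreconnected self_mem_Ici (fun s' hs' hs'm => ?_)
      ⟨1, unitInterval.le_one t, h1⟩
    have hstt : s = t := le_antisymm hst (honce hs hs'm ▸ hs')
    exact ht (hstt ▸ hs)

end Partition

section Linking

theorem exists_retraction_of_tietzeExtension_inter.{u} {E : Type u} [TopologicalSpace E]
    [NormalSpace E] {P N : Set E} (hP : IsClosed P) (hN : IsClosed N)
    [TietzeExtension.{u} ↥(P ∩ N)] :
    ∃ R : E → E, ContinuousOn R (P ∪ N) ∧ EqOn R id P ∧ MapsTo R N (P ∩ N) := by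
  obtain ⟨r, hr⟩ := (ContinuousMap.id ↥(P ∩ N)).exists_restrict_eq (hP.inter hN)
  have hid : EqOn id (fun x => (r x : E)) (P ∩ N) := fun x hx =>
    congrArg Subtype.val (DFunLike.congr_fun hr (⟨x, hx⟩ : ↥(P ∩ N))).symm
  obtain ⟨R, hR, hRP, hRN⟩ := exists_continuousOn_union hP hN continuousOn_id
    (continuous_subtype_val.comp r.continuous).continuousOn hid
  exact ⟨R, hR, hRP, fun x hx => hRN hx ▸ (r x).2⟩

/-- The path `b`, parametrized by `[0, 1]` with endpoints in the plane of height zero, prolonged at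
both ends by vertical half-lines pointing down. The parameter is shifted so that `b` itself is run
through on `[-1/2, 1/2]`. -/
def extendDown (b : ℝ → ℂ × ℝ) (t : ℝ) : ℂ × ℝ := b (t + 1 / 2) - (0, max (|t| - 1 / 2) 0)

section ExtendDown

variable {b : ℝ → ℂ × ℝ} {t : ℝ}

theorem extendDown_of_abs_le (ht : |t| ≤ 1 / 2) : extendDown b t = b (t + 1 / 2) := by
  rw [extendDown, max_eq_right (by linarith), Prod.mk_zero_zero, sub_zero]

theorem extendDown_snd_neg (hb : ∀ t ∉ Ioo (0 : ℝ) 1, (b t).2 = 0) (ht : 1 / 2 < |t|) :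
    (extendDown b t).2 < 0 := by
  have hout : t + 1 / 2 ∉ Ioo (0 : ℝ) 1 := fun h =>
    ht.not_gt (abs_lt.2 ⟨by linarith [h.1], by linarith [h.2]⟩)
  rw [extendDown, Prod.snd_sub, hb _ hout, max_eq_left (by linarith)]
  linarith

theorem extendDown_const_snd_nonpos {b₀ : ℂ × ℝ} (hb₀ : b₀.2 = 0) :
    (extendDown (fun _ => b₀) t).2 ≤ 0 := by
  rw [extendDown, Prod.snd_sub, hb₀, zero_sub]
  exact neg_nonpos.2 (le_max_right _ _)

theorem continuous_extendDown (hb : Continuous b) : Continuous (extendDown b) := by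
  unfold extendDown
  fun_prop

theorem sub_extendDown_ne_zero (hb : ∀ t ∉ Ioo (0 : ℝ) 1, (b t).2 = 0) {x : ℂ × ℝ} (hx : 0 ≤ x.2)
    (hxb : |t| ≤ 1 / 2 → x ≠ b (t + 1 / 2)) : x - extendDown b t ≠ 0 := by
  rw [sub_ne_zero]
  rcases le_or_gt |t| (1 / 2) with ht | ht
  · rw [extendDown_of_abs_le ht]
    exact hxb ht
  · rintro rfl
    exact hx.not_gt (extendDown_snd_neg hb ht)

theorem sub_extendDown_ne_zero_of_mem_sphere (hb : ∀ t ∉ Ioo (0 : ℝ) 1, (b t).2 = 0)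
    {j : ℂ → ℂ × ℝ} (hj0 : ∀ d, 0 ≤ (j d).2) (hjb : ∀ d, ‖d‖ = 1 → ∀ t, j d ≠ b t) {u : ℂ × ℝ}
    (hu : u ∈ Metric.sphere 0 1) : j u.1 - extendDown b u.2 ≠ 0 := by
  refine sub_extendDown_ne_zero hb (hj0 _) fun ht => ?_
  rcases mem_sphere_prod_iff.1 hu with ⟨hd, -⟩ | ⟨-, ht'⟩
  · exact hjb _ hd _
  · linarith

end ExtendDown

namespace ExtendsNonvanishing

variable {j : ℂ → ℂ × ℝ}

theorem sub_extendDown_of_eqOn {j' : ℂ → ℂ × ℝ} {b : ℝ → ℂ × ℝ} (hj : Continuous j)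
    (hj0 : ∀ d, 0 ≤ (j d).2) (hj' : Continuous j') (hj'0 : ∀ d, 0 ≤ (j' d).2)
    (hjj' : ∀ d, ‖d‖ = 1 → j' d = j d) (hb : Continuous b)
    (hb0 : ∀ t ∉ Ioo (0 : ℝ) 1, (b t).2 = 0) (hne : ∀ d t, j' d ≠ b t) :
    ExtendsNonvanishing fun u : ℂ × ℝ => j u.1 - extendDown b u.2 := by
  have hβ := continuous_extendDown hb
  have hne' : ∀ u : ℂ × ℝ, j' u.1 - extendDown b u.2 ≠ 0 := fun u =>
    sub_extendDown_ne_zero hb0 (hj'0 _) fun _ => hne _ _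
  refine (of_continuousOn (by fun_prop) fun u _ => hne' u).linear_homotopy (by fun_prop)
    (by fun_prop) ?_
  rintro s ⟨hs0, hs1⟩ ⟨d, t⟩ hu
  rcases mem_sphere_prod_iff.1 hu with ⟨hd, -⟩ | ⟨-, ht⟩
  · have hd' := hne' (d, t)
    simp only [hjj' d hd] at hd' ⊢
    rwa [← add_smul, sub_add_cancel, one_smul]
  · intro h
    have hheight : (1 - s) * ((j' d).2 - (extendDown b t).2) +
      s * ((j d).2 - (extendDown b t).2) = 0 := congrArg Prod.snd h
    have hdown := extendDown_snd_neg hb0 (t := t) (ht.symm ▸ one_half_lt_one)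
    nlinarith [hj0 d, hj'0 d]

-- Push the vertical lines down, away from the image of `j`.
theorem sub_extendDown_const {b₀ : ℂ × ℝ} (hj : Continuous j) (hj0 : ∀ d, 0 ≤ (j d).2)
    (hb₀ : b₀.2 = 0) (hjb : ∀ d, ‖d‖ = 1 → j d ≠ b₀) :
    ExtendsNonvanishing fun u : ℂ × ℝ => j u.1 - extendDown (fun _ => b₀) u.2 := by
  have hβ : Continuous (extendDown fun _ => b₀) := continuous_extendDown continuous_const
  have hheight : ∀ u : ℂ × ℝ, 0 ≤ (j u.1 - extendDown (fun _ => b₀) u.2).2 := fun u =>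
    sub_nonneg.2 ((extendDown_const_snd_nonpos hb₀).trans (hj0 _))
  have hlifted : ExtendsNonvanishing
      fun u : ℂ × ℝ => j u.1 - extendDown (fun _ => b₀) u.2 + (0, 1) :=
    of_continuousOn (by fun_prop) fun u _ h => by
      have hsnd : (j u.1 - extendDown (fun _ => b₀) u.2).2 + 1 = 0 := congrArg Prod.snd h
      linarith [hheight u]
  refine hlifted.linear_homotopy (by fun_prop) (by fun_prop) ?_
  rintro s ⟨hs0, hs1⟩ u hu h
  have hsnd : (1 - s) * ((j u.1 - extendDown (fun _ => b₀) u.2).2 + 1) +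
    s * (j u.1 - extendDown (fun _ => b₀) u.2).2 = 0 := congrArg Prod.snd h
  obtain rfl : s = 1 := by linarith [hheight u]
  exact sub_extendDown_ne_zero_of_mem_sphere (fun _ _ => hb₀) hj0 (fun d hd _ => hjb d hd) hu
    (by simpa using h)

theorem sub_extendDown_of_homotopy {c : ℝ → ℝ → ℂ × ℝ} {b₀ : ℂ × ℝ} (hj : Continuous j)
    (hj0 : ∀ d, 0 ≤ (j d).2)
    (hc : ContinuousOn (fun p : ℝ × ℝ => c p.1 p.2) (Icc 0 1 ×ˢ univ)) (hcb₀ : ∀ t, c 0 t = b₀)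
    (hc0 : ∀ s ∈ Icc (0 : ℝ) 1, ∀ t ∉ Ioo (0 : ℝ) 1, (c s t).2 = 0)
    (hjc : ∀ s ∈ Icc (0 : ℝ) 1, ∀ d, ‖d‖ = 1 → ∀ t, j d ≠ c s t) :
    ExtendsNonvanishing fun u : ℂ × ℝ => j u.1 - extendDown (c 1) u.2 := by
  have hzero : (0 : ℝ) ∈ Icc (0 : ℝ) 1 := ⟨le_rfl, zero_le_one⟩
  refine (sub_extendDown_const (b₀ := b₀) hj hj0 (hcb₀ 0 ▸ hc0 0 hzero 0 (by simp))
    fun d hd => hcb₀ 0 ▸ hjc 0 hzero d hd 0).homotopy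
    (H := fun s u => j u.1 - extendDown (c s) u.2) ?_
    (fun s hs u hu => sub_extendDown_ne_zero_of_mem_sphere (hc0 s hs) hj0 (hjc s hs) hu)
    (fun u _ => by simp only [extendDown, hcb₀]) fun _ _ => rfl
  have hc' : ContinuousOn (fun p : ℝ × (ℂ × ℝ) => c p.1 (p.2.2 + 1 / 2))
      (Icc 0 1 ×ˢ Metric.sphere 0 1) :=
    hc.comp (f := fun p : ℝ × (ℂ × ℝ) => (p.1, p.2.2 + 1 / 2)) (by fun_prop)
      fun p hp => ⟨hp.1, mem_univ _⟩
  unfold extendDown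
  exact ContinuousOn.sub (by fun_prop) (hc'.sub (by fun_prop))

-- Replace `j` by its retraction to `P`, or contract `b` within the convex set `P ∪ N` and retract
-- the contraction to `N`.
theorem sub_extendDown_of_partition {P N : Set (ℂ × ℝ)} (hP : IsClosed P) (hN : IsClosed N)
    [TietzeExtension.{0} ↥(P ∩ N)] (hconv : Convex ℝ (P ∪ N)) (hnonneg : ∀ x ∈ P ∪ N, 0 ≤ x.2)
    (hbot : ∀ x ∈ P ∪ N, x.2 = 0 → x ∈ N) (hj : Continuous j) (hjmem : ∀ d, j d ∈ P ∪ N)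
    (hjP : ∀ d, ‖d‖ = 1 → j d ∈ P) {b : ℝ → ℂ × ℝ} (hb : Continuous b) (hbN : ∀ t, b t ∈ N)
    (hb0 : ∀ t ∉ Ioo (0 : ℝ) 1, (b t).2 = 0)
    (hcase : (∀ t, b t ∉ P) ∨ ∀ d, ‖d‖ = 1 → j d ∉ N) :
    ExtendsNonvanishing fun u : ℂ × ℝ => j u.1 - extendDown b u.2 := by
  have hj0 : ∀ d, 0 ≤ (j d).2 := fun d => hnonneg _ (hjmem d)
  rcases hcase with hbP | hjN
  · obtain ⟨R, hR, hRP, hRN⟩ := exists_retraction_of_tietzeExtension_inter hP hN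
    have hRmem : ∀ x ∈ P ∪ N, R x ∈ P := fun x hx =>
      hx.elim (fun h => (hRP h).symm ▸ h) fun h => (hRN h).1
    exact sub_extendDown_of_eqOn hj hj0 (hR.comp_continuous hj hjmem)
      (fun d => hnonneg _ (Or.inl (hRmem _ (hjmem d)))) (fun d hd => hRP (hjP d hd)) hb hb0
      fun d t h => hbP t (h ▸ hRmem _ (hjmem d))
  · have : TietzeExtension.{0} ↥(N ∩ P) := inter_comm P N ▸ ‹_›
    obtain ⟨R, hR, hRN, hRP⟩ := exists_retraction_of_tietzeExtension_inter hN hP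
    rw [union_comm] at hR
    have hRmem : ∀ x ∈ P ∪ N, R x ∈ N := fun x hx =>
      hx.elim (fun h => (hRP h).1) fun h => (hRN h).symm ▸ h
    let c : ℝ → ℝ → ℂ × ℝ := fun s t => (1 - s) • b 0 + s • b t
    have hcmem : ∀ s ∈ Icc (0 : ℝ) 1, ∀ t, c s t ∈ P ∪ N := fun s hs t =>
      hconv (Or.inr (hbN 0)) (Or.inr (hbN t)) (sub_nonneg.2 hs.2) hs.1 (sub_add_cancel _ _)
    have hc0 : ∀ s ∈ Icc (0 : ℝ) 1, ∀ t ∉ Ioo (0 : ℝ) 1, (R (c s t)).2 = 0 := by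
      intro s hs t ht
      have hsnd : (c s t).2 = 0 := by simp [c, hb0 t ht, hb0 0 (by simp)]
      rw [hRN (hbot _ (hcmem s hs t) hsnd), id, hsnd]
    have hRc : ContinuousOn (fun p : ℝ × ℝ => R (c p.1 p.2)) (Icc 0 1 ×ˢ univ) :=
      hR.comp (by fun_prop) fun p hp => hcmem p.1 hp.1 p.2
    have hRb : (fun t => R (c 1 t)) = b := funext fun t => by simp [c, hRN (hbN t)]
    exact hRb ▸ sub_extendDown_of_homotopy (c := fun s t => R (c s t)) (b₀ := R (b 0)) hj hj0 hRc
      (fun t => by simp [c]) hc0 fun s hs d hd t h => hjN d hd (h ▸ hRmem _ (hcmem s hs t))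

end ExtendsNonvanishing

end Linking

section Local

-- In the chart `θ`, near its zero the map `F` is a difference of inclusions of complementary
-- subspaces.
theorem not_extendsNonvanishing_of_chart {E : Type*} [NormedAddCommGroup E] [NormedSpace ℝ E]
    [FiniteDimensional ℝ E] [Nontrivial E] {F K p p' θ : E → E} {q y : E} {r : ℝ}
    (hF : ContinuousOn F (Metric.closedBall 0 1)) (hq : ‖q‖ < 1)
    (hF0 : ∀ x ∈ Metric.closedBall (0 : E) 1, F x = 0 → x = q) (hK : Continuous K)
    (hKq : ∀ u, K u = q ↔ u = 0) (hp : Continuous p) (hp' : Continuous p') (hp0 : p 0 = y)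
    (hp0' : p' 0 = y) (hFK : ∀ u, F (K u) = p u - p' u) (hr : 0 < r)
    (hθ : ContinuousOn θ (Metric.closedBall y r)) (hinj : InjOn θ (Metric.closedBall y r))
    (L : E ≃L[ℝ] E) (hL : ∀ u, θ (p u) - θ (p' u) = L u) : ¬ ExtendsNonvanishing F := by
  intro hext
  obtain ⟨ε, hε, hball⟩ : ∃ ε > 0, ∀ u ∈ Metric.closedBall (0 : E) ε,
      K u ∈ Metric.closedBall 0 1 ∧ p u ∈ Metric.closedBall y (r / 2) ∧
        p' u ∈ Metric.closedBall y (r / 2) := by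
    have hK0 : Metric.closedBall (0 : E) 1 ∈ 𝓝 (K 0) := by
      rw [(hKq 0).2 rfl]
      exact Metric.closedBall_mem_nhds_of_mem (mem_ball_zero_iff.2 hq)
    have hball : Metric.closedBall y (r / 2) ∈ 𝓝 y := Metric.closedBall_mem_nhds _ (half_pos hr)
    exact Metric.nhds_basis_closedBall.mem_iff.1 ((hK.continuousAt.eventually_mem hK0).and
      ((hp.continuousAt.eventually_mem (hp0 ▸ hball)).and
        (hp'.continuousAt.eventually_mem (hp0' ▸ hball))))
  have hmem : ∀ u ∈ Metric.closedBall (0 : E) 1, ε • u ∈ Metric.closedBall (0 : E) ε :=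
    fun u hu => smul_unitClosedBall_of_nonneg (E := E) hε.le ▸ smul_mem_smul_set hu
  have hrescaled := hext.comp_of_unique_zero (K := fun u => K (ε • u)) hF hq hF0 (by fun_prop)
    (fun u hu => (hball _ (hmem u (Metric.sphere_subset_closedBall hu))).1) fun u hu h => by
      rw [hKq, smul_eq_zero, or_iff_right hε.ne'] at h
      exact Metric.ne_of_mem_sphere hu one_ne_zero h
  exact ExtendsNonvanishing.not_sub_of_injOn (p := fun u => p (ε • u)) (p' := fun u => p' (ε • u))
    hr hθ hinj (by fun_prop) (by fun_prop) (fun u hu => (hball _ (hmem u hu)).2.1)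
    (fun u hu => (hball _ (hmem u hu)).2.2)
    ((ContinuousLinearEquiv.smulLeft (Units.mk0 ε hε.ne')).trans L) (fun u _ => hL _)
    (hrescaled.congr fun u _ => hFK _)

end Local

section Coordinates

/-- The solid cylinder `B² × [0,1]`, in which the points of a chamber have their coordinates. -/
def cylinder : Set (ℂ × ℝ) := Disc2 ×ˢ Icc 0 1

theorem convex_cylinder : Convex ℝ cylinder := (convex_closedBall 0 1).prod (convex_Icc 0 1)

theorem isClosed_cylinder : IsClosed cylinder := Metric.isClosed_closedBall.prod isClosed_Icc

/-- The radial projection of the plane to the closed unit disc. -/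
def discProj (d : ℂ) : ↥Disc2 :=
  ⟨ballRetract 1 d, ballRetract_mem_closedBall one_pos d⟩

theorem continuous_discProj : Continuous discProj :=
  (continuous_ballRetract one_pos).subtype_mk _

theorem discProj_coe (d : ↥Disc2) : discProj d = d :=
  Subtype.ext (ballRetract_of_norm_le one_pos (mem_closedBall_zero_iff.1 d.2))

theorem coe_discProj_of_mem {d : ℂ} (hd : d ∈ Disc2) : (discProj d : ℂ) = d :=
  congrArg Subtype.val (discProj_coe ⟨d, hd⟩)

namespace Chamber

variable (C : Chamber X)

/-- The coordinates of a point of a chamber, as an element of the vector space `ℂ × ℝ`. -/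
def coord (x : ↥C.carrier) : ℂ × ℝ := ((C.homeo x).1, (C.homeo x).2)

/-- The point of the chamber with given coordinates. Coordinates outside the cylinder are first
projected to it. -/
def point (z : ℂ × ℝ) : ↥C.carrier :=
  C.homeo.symm (discProj z.1, projIcc 0 1 zero_le_one z.2)

theorem continuous_coord : Continuous C.coord := by
  have := C.homeo.continuous
  unfold coord
  fun_prop

theorem continuous_point : Continuous C.point :=
  C.homeo.symm.continuous.comp ((continuous_discProj.comp continuous_fst).prodMk
    (continuous_projIcc.comp continuous_snd))

theorem coord_mem (x : ↥C.carrier) : C.coord x ∈ cylinder := ⟨(C.homeo x).1.2, (C.homeo x).2.2⟩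

theorem point_coord (x : ↥C.carrier) : C.point (C.coord x) = x := by
  simp only [point, coord, discProj_coe, projIcc_val]
  exact C.homeo.symm_apply_apply x

theorem coord_point {z : ℂ × ℝ} (hz : z ∈ cylinder) : C.coord (C.point z) = z := by
  simp only [point, coord, Homeomorph.apply_symm_apply]
  exact Prod.ext (coe_discProj_of_mem hz.1) (congrArg Subtype.val (projIcc_of_mem zero_le_one hz.2))

theorem coord_injective : Function.Injective C.coord :=
  Function.LeftInverse.injective C.point_coord

variable {C}

theorem mem_image_preimage_iff {x : ↥C.carrier} {Q : Set (↥Disc2 × unitInterval)} :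
    (x : X) ∈ Subtype.val '' (C.homeo ⁻¹' Q) ↔ C.homeo x ∈ Q := by
  rw [Subtype.val_injective.mem_set_image, mem_preimage]

theorem mem_top_iff {x : ↥C.carrier} : (x : X) ∈ C.top ↔ (C.coord x).2 = 1 :=
  mem_image_preimage_iff.trans Subtype.ext_iff

theorem mem_bot_iff {x : ↥C.carrier} : (x : X) ∈ C.bot ↔ (C.coord x).2 = 0 :=
  mem_image_preimage_iff.trans Subtype.ext_iff

theorem mem_bdry_iff {x : ↥C.carrier} : (x : X) ∈ C.bdry ↔
    ‖(C.coord x).1‖ = 1 ∨ (C.coord x).2 = 0 ∨ (C.coord x).2 = 1 :=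
  mem_image_preimage_iff.trans (or_congr Iff.rfl (or_congr Subtype.ext_iff Subtype.ext_iff))

theorem mem_sideAnnulus_iff {x : ↥C.carrier} : (x : X) ∈ C.sideAnnulus ↔
    ‖(C.coord x).1‖ = 1 ∧ (C.coord x).2 ∈ Ioo (0 : ℝ) 1 := by
  have hheight := (C.coord_mem x).2
  rw [sideAnnulus, mem_sdiff, mem_union, mem_top_iff, mem_bot_iff, mem_bdry_iff, not_or]
  constructor
  · rintro ⟨hside, htop, hbot⟩
    exact ⟨by tauto, lt_of_le_of_ne hheight.1 (Ne.symm hbot), lt_of_le_of_ne hheight.2 htop⟩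
  · rintro ⟨hside, hbot, htop⟩
    exact ⟨Or.inl hside, htop.ne, hbot.ne'⟩

theorem mem_interior_of_notMem_bdry {x : ↥C.carrier} (hx : (x : X) ∉ C.bdry) :
    C.coord x ∈ interior cylinder := by
  obtain ⟨hdisc, hheight⟩ := C.coord_mem x
  rw [mem_bdry_iff, not_or, not_or] at hx
  rw [cylinder, interior_prod_eq, interior_closedBall _ one_ne_zero, interior_Icc]
  exact ⟨mem_ball_zero_iff.2 (lt_of_le_of_ne (mem_closedBall_zero_iff.1 hdisc) hx.1),
    lt_of_le_of_ne hheight.1 (Ne.symm hx.2.1), lt_of_le_of_ne hheight.2 hx.2.2⟩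

theorem sideAnnulus_subset_carrier : C.sideAnnulus ⊆ C.carrier := by
  rintro _ ⟨⟨x, -, rfl⟩, -⟩
  exact x.2

theorem point_mem_sideAnnulus {z : ℂ × ℝ} (hside : ‖z.1‖ = 1) (hheight : z.2 ∈ Ioo (0 : ℝ) 1) :
    (C.point z : X) ∈ C.sideAnnulus := by
  rw [mem_sideAnnulus_iff,
    C.coord_point ⟨mem_closedBall_zero_iff.2 hside.le, Ioo_subset_Icc_self hheight⟩]
  exact ⟨hside, hheight⟩

theorem disjoint_top_bot : Disjoint C.top C.bot := by
  rw [Set.disjoint_left]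
  rintro _ ⟨x, hx, rfl⟩ hbot
  exact zero_ne_one ((mem_bot_iff.1 hbot).symm.trans (mem_top_iff.1 (mem_image_of_mem _ hx)))

theorem top_subset_bdry : C.top ⊆ C.bdry :=
  image_mono (preimage_mono fun _ h => Or.inr (Or.inr h))

end Chamber

end Coordinates

section Parametrization

namespace Chamber

variable {C : Chamber X} {B D : Set X}

/-- The coordinates along a disc in a chamber, extended radially to the plane. -/
def paramDisc (hD : D ⊆ C.carrier) (e : ↥D ≃ₜ ↥Disc2) (d : ℂ) : ℂ × ℝ :=
  C.coord (inclusion hD (e.symm (discProj d)))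

/-- The coordinates along an arc in a chamber, extended to be constant beyond the endpoints. -/
def paramArc (hB : B ⊆ C.carrier) (e : unitInterval ≃ₜ ↥B) (t : ℝ) : ℂ × ℝ :=
  C.coord (inclusion hB (e (projIcc 0 1 zero_le_one t)))

theorem continuous_paramDisc (hD : D ⊆ C.carrier) (e : ↥D ≃ₜ ↥Disc2) :
    Continuous (paramDisc hD e) :=
  C.continuous_coord.comp ((continuous_inclusion hD).comp
    (e.symm.continuous.comp continuous_discProj))

theorem continuous_paramArc (hB : B ⊆ C.carrier) (e : unitInterval ≃ₜ ↥B) :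
    Continuous (paramArc hB e) :=
  C.continuous_coord.comp ((continuous_inclusion hB).comp (e.continuous.comp continuous_projIcc))

theorem paramDisc_apply (hD : D ⊆ C.carrier) (e : ↥D ≃ₜ ↥Disc2) (m : ↥D) :
    paramDisc hD e (e m) = C.coord (inclusion hD m) := by
  rw [paramDisc, discProj_coe, Homeomorph.symm_apply_apply]

theorem paramArc_apply (hB : B ⊆ C.carrier) (e : unitInterval ≃ₜ ↥B) (t : unitInterval) :
    paramArc hB e t = C.coord (inclusion hB (e t)) := by
  rw [paramArc, projIcc_val]

theorem injOn_paramDisc (hD : D ⊆ C.carrier) (e : ↥D ≃ₜ ↥Disc2) : InjOn (paramDisc hD e) Disc2 :=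
  fun d hd d' hd' h => by
    have hproj := e.symm.injective (inclusion_injective hD (C.coord_injective h))
    rw [← coe_discProj_of_mem hd, hproj, coe_discProj_of_mem hd']

theorem paramArc_snd_of_notMem (hB : B ⊆ C.carrier) (e : unitInterval ≃ₜ ↥B)
    (h0 : (e 0 : X) ∈ C.bot) (h1 : (e 1 : X) ∈ C.bot) {t : ℝ} (ht : t ∉ Ioo (0 : ℝ) 1) :
    (paramArc hB e t).2 = 0 := by
  rcases le_or_gt t 0 with h | h
  · rw [paramArc, projIcc_of_le_left _ h]
    exact (mem_bot_iff (x := inclusion hB (e 0))).1 h0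
  · have h : 1 ≤ t := not_lt.1 fun h' => ht ⟨h, h'⟩
    rw [paramArc, projIcc_of_right_le _ h]
    exact (mem_bot_iff (x := inclusion hB (e 1))).1 h1

end Chamber

end Parametrization

-- Contract the angle to `0` and the height to `1 / 2`, both linearly.
theorem Chamber.nullHomotopicIn_sideAnnulus {C : Chamber X} {K : Set X} (hK : K ⊆ C.sideAnnulus)
    (θ : C(↥K, ℝ)) (hθ : ∀ x : ↥K,
      (C.coord ⟨x, sideAnnulus_subset_carrier (hK x.2)⟩).1 = Circle.exp (θ x)) :
    NullHomotopicIn K C.sideAnnulus := by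
  let κ : ↥K → ℂ × ℝ := fun x => C.coord ⟨x, sideAnnulus_subset_carrier (hK x.2)⟩
  have hκ : Continuous κ := C.continuous_coord.comp (continuous_subtype_val.subtype_mk _)
  have hκ2 : ∀ x, (κ x).2 ∈ Ioo (0 : ℝ) 1 := fun x => (mem_sideAnnulus_iff.1 (hK x.2)).2
  have hhalf : (1 / 2 : ℝ) ∈ Ioo (0 : ℝ) 1 := by norm_num
  let G : unitInterval × ↥K → ℂ × ℝ := fun p =>
    (Circle.exp ((1 - p.1) * θ p.2), (1 - p.1) * (κ p.2).2 + p.1 * (1 / 2))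
  have hG : Continuous G := by fun_prop
  have hGside : ∀ p, (C.point (G p) : X) ∈ C.sideAnnulus := fun p =>
    point_mem_sideAnnulus (Circle.norm_coe _) ((convex_Ioo 0 1) (hκ2 _) hhalf
      (sub_nonneg.2 p.1.2.2) p.1.2.1 (sub_add_cancel _ _))
  refine ⟨hK, ⟨C.point (1, 1 / 2), point_mem_sideAnnulus norm_one hhalf⟩,
    ⟨⟨⟨fun p => ⟨C.point (G p), hGside p⟩,
      (continuous_subtype_val.comp (C.continuous_point.comp hG)).subtype_mk _⟩,
      fun x => Subtype.ext ?_, fun x => Subtype.ext ?_⟩⟩⟩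
  · have hG0 : G (0, x) = κ x := Prod.ext (by simp [G, κ, hθ]) (by simp [G])
    exact (congrArg (fun z => (C.point z : X)) hG0).trans (congrArg Subtype.val (C.point_coord _))
  · have hG1 : G (1, x) = (1, 1 / 2) := Prod.ext (by simp [G]) (by simp [G])
    exact congrArg (fun z => (C.point z : X)) hG1

namespace InteriorMeridionalDisc

variable {C : Chamber X} (M : InteriorMeridionalDisc C)

theorem subset_carrier : M.carrier ⊆ C.carrier := fun _ hx => (M.subset hx).1

/-- The coordinates of the points of a meridional disc. -/
def coord (m : ↥M.carrier) : ℂ × ℝ := C.coord (inclusion M.subset_carrier m)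

theorem continuous_coord : Continuous M.coord :=
  C.continuous_coord.comp (continuous_inclusion _)

theorem coord_injective : Function.Injective M.coord :=
  C.coord_injective.comp (inclusion_injective _)

theorem coord_snd_mem (m : ↥M.carrier) : (M.coord m).2 ∈ Ioo (0 : ℝ) 1 := by
  have hheight := (C.coord_mem (inclusion M.subset_carrier m)).2
  have hnot := (M.subset m.2).2
  rw [mem_union, not_or] at hnot
  exact ⟨lt_of_le_of_ne hheight.1 fun h => hnot.2
      (Chamber.mem_bot_iff (x := inclusion M.subset_carrier m).2 h.symm),
    lt_of_le_of_ne hheight.2 fun h => hnot.1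
      (Chamber.mem_top_iff (x := inclusion M.subset_carrier m).2 h)⟩

theorem coord_mem_range_iff {x : ↥C.carrier} : C.coord x ∈ range M.coord ↔ (x : X) ∈ M.carrier :=
  ⟨fun ⟨m, hm⟩ => C.coord_injective hm ▸ m.2, fun hx => ⟨⟨x, hx⟩, rfl⟩⟩

theorem mem_bdry_iff {m : ↥M.carrier} : (m : X) ∈ M.bdry ↔ ‖(M.homeo m : ℂ)‖ = 1 := by
  rw [M.bdry_spec, Subtype.val_injective.mem_set_image]
  rfl

theorem bdry_subset_carrier : M.bdry ⊆ M.carrier := M.inter_bdry ▸ inter_subset_left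

theorem norm_paramDisc_fst (z : Circle) :
    ‖(Chamber.paramDisc M.subset_carrier M.homeo z).1‖ = 1 := by
  have hz : ‖(M.homeo (M.homeo.symm (discProj z)) : ℂ)‖ = 1 := by
    rw [Homeomorph.apply_symm_apply,
      coe_discProj_of_mem (mem_closedBall_zero_iff.2 (Circle.norm_coe z).le), Circle.norm_coe]
  exact (Chamber.mem_sideAnnulus_iff (x := inclusion M.subset_carrier _)).1
    (M.bdry_sub (M.mem_bdry_iff.2 hz)) |>.1

theorem not_exists_angle_paramDisc : ¬ ∃ h : C(Circle, ℝ), ∀ z : Circle,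
    (Chamber.paramDisc M.subset_carrier M.homeo z).1 = Circle.exp (h z) := by
  rintro ⟨h, hh⟩
  let ζ : ↥M.bdry → Circle := fun x =>
    ⟨M.homeo (inclusion M.bdry_subset_carrier x), mem_sphere_zero_iff_norm.2 (M.mem_bdry_iff.1 x.2)⟩
  have hζ : Continuous ζ := ((continuous_subtype_val.comp M.homeo.continuous).comp
    (continuous_inclusion _)).subtype_mk _
  refine M.essential (Chamber.nullHomotopicIn_sideAnnulus M.bdry_sub ⟨fun x => h (ζ x), by fun_prop⟩
    fun x => (?_ : _ = (Circle.exp (h (ζ x)) : ℂ)))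
  rw [← hh]
  exact congrArg Prod.fst (Chamber.paramDisc_apply M.subset_carrier M.homeo
    (inclusion M.bdry_subset_carrier x)).symm

theorem exists_parametrization : ∃ (μ : ℂ → ℂ × ℝ) (h : C(Circle, ℝ)), Continuous μ ∧
    (∀ d, μ d ∈ range M.coord) ∧ ∀ z : Circle, (μ z).1 = z * Circle.exp (h z) := by
  let μ : ℂ → ℂ × ℝ := Chamber.paramDisc M.subset_carrier M.homeo
  have hμ : Continuous μ := Chamber.continuous_paramDisc _ _
  have hμM : ∀ d, μ d ∈ range M.coord := fun d => mem_range_self _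
  have hcircle : ∀ z : Circle, (z : ℂ) ∈ Disc2 := fun z =>
    mem_closedBall_zero_iff.2 (Circle.norm_coe z).le
  let f : C(Circle, Circle) :=
    ⟨fun z => ⟨(μ z).1, mem_sphere_zero_iff_norm.2 (M.norm_paramDisc_fst z)⟩, by fun_prop⟩
  let y : C(Circle, ℝ) := ⟨fun z => (μ z).2, by fun_prop⟩
  have hinj : Function.Injective fun z => (f z, y z) := fun z z' hzz' => by
    obtain ⟨hfst, hsnd⟩ := Prod.mk.inj hzz'
    have hμz : μ z = μ z' := Prod.ext (congrArg (fun w : Circle => (w : ℂ)) hfst) hsnd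
    exact Circle.coe_injective (Chamber.injOn_paramDisc _ _ (hcircle z) (hcircle z') hμz)
  obtain ⟨n, h, hn, hnh⟩ := exists_zpow_mul_exp_of_injective hinj
  have hμn : ∀ z : Circle, (μ z).1 = ((z ^ n * Circle.exp (h z) : Circle) : ℂ) := fun z =>
    congrArg Subtype.val (hnh z)
  obtain rfl | rfl | rfl : n = 0 ∨ n = 1 ∨ n = -1 := by lia
  · exact absurd ⟨h, fun z => by rw [hμn, zpow_zero, one_mul]⟩ M.not_exists_angle_paramDisc
  · exact ⟨μ, h, hμ, hμM, fun z => by rw [hμn, zpow_one, Circle.coe_mul]⟩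
  · refine ⟨fun d => μ (starRingEnd ℂ d), ⟨fun z => h z⁻¹, by fun_prop⟩, by fun_prop,
      fun d => hμM _, fun z => ?_⟩
    change (μ (starRingEnd ℂ (z : ℂ))).1 = z * Circle.exp (h z⁻¹)
    rw [← Circle.coe_inv_eq_conj, hμn, zpow_neg_one, inv_inv, Circle.coe_mul]

theorem isClosed_range_coord : IsClosed (range M.coord) := by
  have : CompactSpace ↥M.carrier := M.homeo.symm.compactSpace
  exact (isCompact_range M.continuous_coord).isClosed

theorem not_joinedIn_cylinder_diff_range_coord {x y : ℂ × ℝ} (hx : x.2 = 1) (hy : y.2 = 0) :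
    ¬ JoinedIn (cylinder \ range M.coord) x y := by
  rintro ⟨γ, hγ⟩
  have hextend : ∀ t, γ.extend t ∈ cylinder \ range M.coord := fun t => by
    obtain ⟨s, hs⟩ : γ.extend t ∈ range γ := γ.extend_range ▸ mem_range_self t
    exact hs ▸ hγ s
  obtain ⟨μ, h, hμ, hμM, hbd⟩ := M.exists_parametrization
  have hheight : ∀ d, (μ d).2 ∈ Ioo (0 : ℝ) 1 := fun d => by
    obtain ⟨m, hm⟩ := hμM d
    exact hm ▸ M.coord_snd_mem m
  obtain ⟨d, -, t, -, hdt⟩ := exists_disc_eq_path hμ (fun d _ => hheight d) h hbd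
    (p := fun t => γ.extend ((1 - t) / 2)) (by fun_prop)
    (fun t => mem_closedBall_zero_iff.1 (hextend _).1.1)
    (by norm_num; exact hy.le) (by norm_num; exact hx.ge)
  exact (hextend _).2 (hdt ▸ hμM d)

theorem exists_partition : ∃ P N : Set (ℂ × ℝ), IsClosed P ∧ IsClosed N ∧ P ∪ N = cylinder ∧
    P ∩ N = range M.coord ∧ (∀ z ∈ cylinder, z.2 = 1 → z ∈ P) ∧
    ∀ z ∈ cylinder, z.2 = 0 → z ∈ N := by
  have hM : ∀ z ∈ range M.coord, z.2 ∈ Ioo (0 : ℝ) 1 := forall_mem_range.2 M.coord_snd_mem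
  obtain ⟨P, N, hP, hN, hunion, hinter, htop, hbot⟩ := exists_isClosed_partition convex_cylinder
    isClosed_cylinder M.isClosed_range_coord (range_subset_iff.2 fun m => C.coord_mem _)
    (T := {z ∈ cylinder | z.2 = 1}) (V := {z ∈ cylinder | z.2 = 0})
    (fun z hz => ⟨hz.1, fun hzM => (hM z hzM).2.ne hz.2⟩) (sep_subset _ _)
    fun x hx y hy => M.not_joinedIn_cylinder_diff_range_coord hx.2 hy.2
  exact ⟨P, N, hP, hN, hunion, hinter, fun z hz h1 => htop ⟨hz, h1⟩, fun z hz h0 => hbot ⟨hz, h0⟩⟩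

theorem tietzeExtension_range_coord : TietzeExtension.{0} ↥(range M.coord) :=
  have : CompactSpace ↥M.carrier := M.homeo.symm.compactSpace
  .of_homeo ((M.continuous_coord.isClosedEmbedding
    M.coord_injective).isEmbedding.toHomeomorph.symm.trans M.homeo)

end InteriorMeridionalDisc

section Chart

/-- Euclidean three-space as the product of the complex plane and a line. -/
def euclideanHomeoProd : EuclideanSpace ℝ (Fin 3) ≃ₜ ℂ × ℝ where
  toFun v := (Complex.equivRealProdCLM.symm (v 0, v 1), v 2)
  invFun p := !₂[p.1.re, p.1.im, p.2]
  left_inv v := by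
    ext i
    fin_cases i <;> rfl
  right_inv _ := rfl
  continuous_toFun := by fun_prop
  continuous_invFun := by
    refine (PiLp.continuous_toLp 2 _).comp (continuous_pi fun i => ?_)
    fin_cases i
    · exact Complex.continuous_re.comp continuous_fst
    · exact Complex.continuous_im.comp continuous_fst
    · exact continuous_snd

theorem symm_mem_of_image_eq {U D : Set X} {φ : ↥U ≃ₜ Y} {S : Set Y}
    (h : φ '' {y : ↥U | (y : X) ∈ D} = S) {v : Y} (hv : v ∈ S) : (φ.symm v : X) ∈ D := by
  rw [← h] at hv
  obtain ⟨y, hy, rfl⟩ := hv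
  rwa [φ.symm_apply_apply]

theorem TransverseAt.exists_chart {D L : Set X} {x : X} (h : TransverseAt D L x) (hxD : x ∈ D)
    (hxL : x ∈ L) : ∃ (U : Set X) (φ : ↥U ≃ₜ ℂ × ℝ), IsOpen U ∧
      (φ.symm 0 : X) = x ∧ (∀ d, (φ.symm (d, 0) : X) ∈ D) ∧ ∀ w, (φ.symm (0, w) : X) ∈ L := by
  obtain ⟨U, φ, hU, hxU, hD, hL⟩ := h
  have hplane : φ ⟨x, hxU⟩ ∈ {v : EuclideanSpace ℝ (Fin 3) | v 2 = 0} :=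
    hD ▸ mem_image_of_mem φ hxD
  have haxis : φ ⟨x, hxU⟩ ∈ {v : EuclideanSpace ℝ (Fin 3) | v 0 = 0 ∧ v 1 = 0} :=
    hL ▸ mem_image_of_mem φ hxL
  have hx : (φ.trans euclideanHomeoProd) ⟨x, hxU⟩ = 0 :=
    Prod.ext (Complex.ext haxis.1 haxis.2) hplane
  refine ⟨U, φ.trans euclideanHomeoProd, hU, ?_, fun d => symm_mem_of_image_eq hD rfl,
    fun w => symm_mem_of_image_eq hL ⟨rfl, rfl⟩⟩
  rw [← hx, Homeomorph.symm_apply_apply]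

theorem mem_Ioo_of_continuous_of_injective {f : ℝ → ℝ} {a b : ℝ} (hf : Continuous f)
    (hinj : Function.Injective f) (hmem : ∀ t, f t ∈ Icc a b) (t : ℝ) : f t ∈ Ioo a b := by
  rcases hf.strictMono_of_inj hinj with h | h
  · exact ⟨(hmem (t - 1)).1.trans_lt (h (by linarith)), (h (by linarith)).trans_le (hmem (t + 1)).2⟩
  · exact ⟨(hmem (t + 1)).1.trans_lt (h (by linarith)), (h (by linarith)).trans_le (hmem (t - 1)).2⟩

namespace Chamber

variable {C : Chamber X} {E : Type*} {U : Set X}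

section ChartCoord

variable [TopologicalSpace E] [Zero E] {φ : ↥U ≃ₜ E}

open Classical in
variable (C φ) in
/-- A chart of the ambient space, expressed in the coordinates of a chamber. It takes the junk
value `0` outside the domain of the chart. -/
def chartCoord (z : ℂ × ℝ) : E := if h : (C.point z : X) ∈ U then φ ⟨C.point z, h⟩ else 0

theorem chartCoord_of_mem {z : ℂ × ℝ} (hz : (C.point z : X) ∈ U) :
    C.chartCoord φ z = φ ⟨C.point z, hz⟩ := dif_pos hz

theorem chartCoord_coord {x : ↥C.carrier} {u : E} (hx : (x : X) = φ.symm u) :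
    C.chartCoord φ (C.coord x) = u := by
  have hpoint : (C.point (C.coord x) : X) = φ.symm u := by rw [C.point_coord, hx]
  rw [chartCoord_of_mem (hpoint ▸ (φ.symm u).2), ← φ.eq_symm_apply]
  exact Subtype.ext hpoint

theorem continuousOn_chartCoord :
    ContinuousOn (C.chartCoord φ) {z | (C.point z : X) ∈ U} := by
  have hrestrict : {z | (C.point z : X) ∈ U}.domRestrict (C.chartCoord φ) =
      fun z : ↥{z | (C.point z : X) ∈ U} => φ ⟨C.point z, z.2⟩ :=
    funext fun z => chartCoord_of_mem z.2
  rw [continuousOn_iff_continuous_domRestrict, hrestrict]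
  exact φ.continuous.comp ((continuous_subtype_val.comp
    (C.continuous_point.comp continuous_subtype_val)).subtype_mk _)

theorem injOn_chartCoord :
    InjOn (C.chartCoord φ) (cylinder ∩ {z | (C.point z : X) ∈ U}) := by
  rintro z ⟨hz, hzU⟩ z' ⟨hz', hzU'⟩ h
  rw [chartCoord_of_mem hzU, chartCoord_of_mem hzU'] at h
  rw [← C.coord_point hz, Subtype.ext (Subtype.mk.inj (φ.injective h)), C.coord_point hz']

end ChartCoord

theorem exists_closedBall_subset_cylinder_inter (hU : IsOpen U) {x : ↥C.carrier}
    (hxU : (x : X) ∈ U) (hx : (x : X) ∉ C.bdry) : ∃ r > 0, Metric.closedBall (C.coord x) r ⊆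
      cylinder ∩ {z | (C.point z : X) ∈ U} := by
  refine Metric.nhds_basis_closedBall.mem_iff.1 (Filter.inter_mem
    (mem_interior_iff_mem_nhds.1 (mem_interior_of_notMem_bdry hx)) ?_)
  refine (continuous_subtype_val.comp C.continuous_point).continuousAt.preimage_mem_nhds
    (hU.mem_nhds ?_)
  rwa [Function.comp_apply, C.point_coord]

end Chamber

end Chart

section Crossing

section AxisParam

variable {B U : Set X} (eB : unitInterval ≃ₜ ↥B) {φ : ↥U ≃ₜ ℂ × ℝ}
  (hφB : ∀ w, (φ.symm (0, w) : X) ∈ B)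

/-- The parameters of an arc along the axis of a chart. -/
def axisParam (w : ℝ) : unitInterval := eB.symm ⟨φ.symm (0, w), hφB w⟩

theorem continuous_axisParam : Continuous (axisParam eB hφB) := by
  have hφ := φ.symm.continuous
  exact eB.symm.continuous.comp (by fun_prop)

theorem axisParam_injective : Function.Injective (axisParam eB hφB) := fun _ _ h =>
  congrArg Prod.snd (φ.symm.injective (Subtype.ext (Subtype.mk.inj (eB.symm.injective h))))

theorem apply_axisParam (w : ℝ) : (eB (axisParam eB hφB w) : X) = φ.symm (0, w) :=
  congrArg (fun b : ↥B => (b : X)) (eB.apply_symm_apply _)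

end AxisParam

namespace Chamber

variable {C : Chamber X} {B D : Set X} (hB : B ⊆ C.carrier) (eB : unitInterval ≃ₜ ↥B)
  (hD : D ⊆ C.carrier) (eD : ↥D ≃ₜ ↥Disc2)

theorem paramDisc_sub_extendDown_paramArc (m : ↥D) (t : unitInterval) :
    paramDisc hD eD (eD m) - extendDown (paramArc hB eB) (t - 1 / 2) =
      C.coord (inclusion hD m) - C.coord (inclusion hB (eB t)) := by
  have ht : |(t : ℝ) - 1 / 2| ≤ 1 / 2 := abs_le.2 ⟨by linarith [t.2.1], by linarith [t.2.2]⟩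
  rw [paramDisc_apply, extendDown_of_abs_le ht, sub_add_cancel, paramArc_apply]

theorem exists_eq_of_paramDisc_sub_extendDown_eq_zero (h0 : (eB 0 : X) ∈ C.bot)
    (h1 : (eB 1 : X) ∈ C.bot) {u : ℂ × ℝ} (hu : u.1 ∈ Disc2)
    (hzero : paramDisc hD eD u.1 - extendDown (paramArc hB eB) u.2 = 0) :
    ∃ (m : ↥D) (t : unitInterval), (m : X) = eB t ∧ u = ((eD m : ℂ), (t : ℝ) - 1 / 2) := by
  obtain ⟨d, s⟩ := u
  have hs : |s| ≤ 1 / 2 := by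
    by_contra! hs
    have hneg := extendDown_snd_neg (fun t ht => paramArc_snd_of_notMem hB eB h0 h1 ht) hs
    rw [← sub_eq_zero.1 hzero] at hneg
    exact hneg.not_ge (C.coord_mem _).2.1
  obtain ⟨hs0, hs1⟩ := abs_le.1 hs
  let m : ↥D := eD.symm ⟨d, hu⟩
  let t : unitInterval := ⟨s + 1 / 2, by linarith, by linarith⟩
  have hm : (eD m : ℂ) = d := congrArg Subtype.val (eD.apply_symm_apply _)
  have ht : (t : ℝ) - 1 / 2 = s := add_sub_cancel_right s _
  refine ⟨m, t, ?_, Prod.ext hm.symm ht.symm⟩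
  rw [← hm, ← ht, paramDisc_sub_extendDown_paramArc, sub_eq_zero] at hzero
  exact Subtype.mk.inj (C.coord_injective hzero)

theorem eq_of_paramDisc_sub_extendDown_eq_zero (h0 : (eB 0 : X) ∈ C.bot) (h1 : (eB 1 : X) ∈ C.bot)
    {x : X} (hBD : B ∩ D = {x}) {m : ↥D} {t : unitInterval} (hm : (m : X) = x)
    (ht : (eB t : X) = x) {u : ℂ × ℝ} (hu : u.1 ∈ Disc2)
    (hzero : paramDisc hD eD u.1 - extendDown (paramArc hB eB) u.2 = 0) :
    u = ((eD m : ℂ), (t : ℝ) - 1 / 2) := by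
  obtain ⟨m', t', hmt, rfl⟩ :=
    exists_eq_of_paramDisc_sub_extendDown_eq_zero hB eB hD eD h0 h1 hu hzero
  have hm' : (m' : X) = x := hBD.subset ⟨hmt ▸ (eB t').2, m'.2⟩
  rw [Subtype.ext (hm'.trans hm.symm),
    eB.injective (Subtype.ext ((hmt.symm.trans hm').trans ht.symm))]

theorem not_extendsNonvanishing_paramDisc_sub_of_chart (h0 : (eB 0 : X) ∈ C.bot)
    (h1 : (eB 1 : X) ∈ C.bot) {U : Set X} (hU : IsOpen U) (φ : ↥U ≃ₜ ℂ × ℝ)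
    (hφD : ∀ d, (φ.symm (d, 0) : X) ∈ D) (hφB : ∀ w, (φ.symm (0, w) : X) ∈ B)
    (hBD : B ∩ D = {(φ.symm 0 : X)}) (hbdry : (φ.symm 0 : X) ∉ C.bdry)
    (hbdryD : ‖(eD ⟨φ.symm 0, hφD 0⟩ : ℂ)‖ < 1) : ¬ ExtendsNonvanishing
      fun u : ℂ × ℝ => paramDisc hD eD u.1 - extendDown (paramArc hB eB) u.2 := by
  let mD : ℂ → ↥D := fun d => ⟨φ.symm (d, 0), hφD d⟩
  let t : ℝ → unitInterval := axisParam eB hφB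
  have hφ := φ.symm.continuous
  have hmD : Continuous mD := by fun_prop
  have hmD_inj : ∀ d, eD (mD d) = eD (mD 0) → d = 0 := fun d h => congrArg Prod.fst <|
    φ.symm.injective (Subtype.ext (Subtype.mk.inj (eD.injective h)))
  have ht : Continuous t := continuous_axisParam eB hφB
  have heB : ∀ w, (eB (t w) : X) = φ.symm (0, w) := apply_axisParam eB hφB
  obtain ⟨r, hr, hball⟩ := exists_closedBall_subset_cylinder_inter (x := inclusion hD (mD 0)) hU
    (φ.symm 0).2 hbdry
  have hcontD := continuous_paramDisc hD eD
  have hcontB := continuous_extendDown (continuous_paramArc hB eB)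
  have hunique := fun u (hu : u ∈ Metric.closedBall (0 : ℂ × ℝ) 1) =>
    eq_of_paramDisc_sub_extendDown_eq_zero hB eB hD eD h0 h1 hBD (m := mD 0) rfl (heB 0)
      (mem_closedBall_zero_iff.2 (mem_closedBall_prod_iff.1 hu).1)
  have hchartD : ∀ d, C.chartCoord φ (C.coord (inclusion hD (mD d))) = (d, 0) := fun d =>
    chartCoord_coord rfl
  have hchartB : ∀ w, C.chartCoord φ (C.coord (inclusion hB (eB (t w)))) = (0, w) := fun w =>
    chartCoord_coord (heB w)
  refine not_extendsNonvanishing_of_chart (q := ((eD (mD 0) : ℂ), (t 0 : ℝ) - 1 / 2))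
    (K := fun u => ((eD (mD u.1) : ℂ), (t u.2 : ℝ) - 1 / 2))
    (p := fun u => C.coord (inclusion hD (mD u.1)))
    (p' := fun u => C.coord (inclusion hB (eB (t u.2)))) (θ := C.chartCoord φ)
    (by fun_prop) ?_ hunique (by fun_prop) ?_
    (C.continuous_coord.comp ((continuous_inclusion hD).comp (hmD.comp continuous_fst)))
    (C.continuous_coord.comp ((continuous_inclusion hB).comp
      (eB.continuous.comp (ht.comp continuous_snd)))) rfl
    (congrArg C.coord (Subtype.ext (heB 0)))
    (fun u => paramDisc_sub_extendDown_paramArc hB eB hD eD _ _) hr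
    (continuousOn_chartCoord.mono fun z hz => (hball hz).2) (injOn_chartCoord.mono hball)
    ((ContinuousLinearEquiv.refl ℝ ℂ).prodCongr (ContinuousLinearEquiv.neg ℝ)) fun u => ?_
  · refine max_lt hbdryD (abs_lt.2 ⟨?_, ?_⟩) <;> linarith [(t 0).2.1, (t 0).2.2]
  · rintro ⟨d, w⟩
    refine ⟨fun h => ?_, by rintro ⟨⟩; rfl⟩
    obtain ⟨hd, hw⟩ := Prod.mk.inj h
    exact Prod.ext (hmD_inj d (Subtype.ext hd)) 
      (axisParam_injective eB hφB (Subtype.ext (sub_left_injective hw)))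
  · rw [hchartD, hchartB]
    simp

theorem not_extendsNonvanishing_paramDisc_sub (h0 : (eB 0 : X) ∈ C.bot) (h1 : (eB 1 : X) ∈ C.bot)
    (hint : ∀ t : unitInterval, t ≠ 0 → t ≠ 1 → (eB t : X) ∈ C.carrier \ C.bdry) {x : X}
    (hBD : B ∩ D = {x}) (htrans : TransverseAt D B x)
    (hx : ∀ m : ↥D, ‖(eD m : ℂ)‖ = 1 → (m : X) ≠ x) : ¬ ExtendsNonvanishing
      fun u : ℂ × ℝ => paramDisc hD eD u.1 - extendDown (paramArc hB eB) u.2 := by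
  have hxBD : x ∈ B ∩ D := hBD ▸ mem_singleton x
  obtain ⟨U, φ, hU, rfl, hφD, hφB⟩ := htrans.exists_chart hxBD.2 hxBD.1
  refine not_extendsNonvanishing_paramDisc_sub_of_chart hB eB hD eD h0 h1 hU φ hφD hφB hBD ?_
    (lt_of_le_of_ne (mem_closedBall_zero_iff.1 (eD _).2) fun h => hx _ h rfl)
  obtain ⟨hpos, hlt⟩ := mem_Ioo_of_continuous_of_injective
    (continuous_subtype_val.comp (continuous_axisParam eB hφB))
    (Subtype.val_injective.comp (axisParam_injective eB hφB))
    (fun w => (axisParam eB hφB w).2) 0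
  exact apply_axisParam eB hφB 0 ▸
    (hint _ (Subtype.coe_ne_coe.1 hpos.ne') (Subtype.coe_ne_coe.1 hlt.ne)).2

end Chamber

end Crossing

section ClaspedArcs

theorem IsArcWithEndpointsIn.disjoint_top {B : Set X} {C : Chamber X}
    (hB : IsArcWithEndpointsIn B C C.bot) : Disjoint B C.top := by
  obtain ⟨-, e, h0, h1, hint⟩ := hB
  refine disjoint_left.2 fun b hb htop => ?_
  obtain ⟨t, ht⟩ := e.surjective ⟨b, hb⟩
  obtain rfl : (e t : X) = b := congrArg (fun b : ↥B => (b : X)) ht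
  have hbot : (e t : X) ∉ C.bot := Chamber.disjoint_top_bot.notMem_of_mem_left htop
  exact (hint t (fun h => hbot (h ▸ h0)) fun h => hbot (h ▸ h1)).2 (Chamber.top_subset_bdry htop)

theorem Chamber.paramDisc_mem_of_norm_eq_one {C : Chamber X} {D : Set X} (hD : D ⊆ C.carrier)
    (e : ↥D ≃ₜ ↥Disc2) {Q : Set (ℂ × ℝ)}
    (hQ : ∀ m : ↥D, ‖(e m : ℂ)‖ = 1 → C.coord (inclusion hD m) ∈ Q) {d : ℂ} (hd : ‖d‖ = 1) :
    paramDisc hD e d ∈ Q :=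
  hQ _ (by rw [e.apply_symm_apply, coe_discProj_of_mem (mem_closedBall_zero_iff.2 hd.le), hd])

namespace InteriorMeridionalDisc

variable {C : Chamber X} (M : InteriorMeridionalDisc C)

theorem exists_partition_of_arcs {A B : Set X} (hA : A ⊆ C.carrier) (eA : unitInterval ≃ₜ ↥A)
    (hA0 : (eA 0 : X) ∈ C.top) (hA1 : (eA 1 : X) ∈ C.top)
    (hAM : (A ∩ M.carrier).Subsingleton) (hB : B ⊆ C.carrier) (eB : unitInterval ≃ₜ ↥B)
    (hB0 : (eB 0 : X) ∈ C.bot) (hB1 : (eB 1 : X) ∈ C.bot)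
    (hBM : (B ∩ M.carrier).Subsingleton) :
    ∃ P N : Set (ℂ × ℝ), IsClosed P ∧ IsClosed N ∧ P ∪ N = cylinder ∧ P ∩ N = range M.coord ∧
      (∀ x : ↥C.carrier, (x : X) ∈ A ∪ C.top → C.coord x ∈ P) ∧
      ∀ x : ↥C.carrier, (x : X) ∈ B ∪ C.bot → C.coord x ∈ N := by
  obtain ⟨P, N, hP, hN, hunion, hinter, htopP, hbotN⟩ := M.exists_partition
  have htop : ∀ x : ↥C.carrier, (x : X) ∈ C.top → C.coord x ∈ P := fun x hx =>
    htopP _ (C.coord_mem x) (Chamber.mem_top_iff.1 hx)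
  have hbot : ∀ x : ↥C.carrier, (x : X) ∈ C.bot → C.coord x ∈ N := fun x hx =>
    hbotN _ (C.coord_mem x) (Chamber.mem_bot_iff.1 hx)
  have honce : ∀ {S : Set X} (hS : S ⊆ C.carrier) (e : unitInterval ≃ₜ ↥S),
      (S ∩ M.carrier).Subsingleton → {t | C.coord (inclusion hS (e t)) ∈ P ∩ N}.Subsingleton := by
    intro S hS e hSM t ht s hs
    rw [mem_ofPred_eq, hinter, coord_mem_range_iff] at ht hs
    exact e.injective (Subtype.ext (hSM ⟨(e t).2, ht⟩ ⟨(e s).2, hs⟩))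
  refine ⟨P, N, hP, hN, hunion, hinter, fun x hx => hx.elim (fun hxA => ?_) (htop x),
    fun x hx => hx.elim (fun hxB => ?_) (hbot x)⟩
  · have hmem := forall_mem_of_isClosed_partition hP hN
      (C.continuous_coord.comp ((continuous_inclusion hA).comp eA.continuous))
      (fun _ => hunion ▸ C.coord_mem _) (htop _ hA0) (htop _ hA1) (honce hA eA hAM)
      (eA.symm ⟨x, hxA⟩)
    rwa [Function.comp_apply, Function.comp_apply, eA.apply_symm_apply] at hmem
  · have hmem := forall_mem_of_isClosed_partition hN hP
      (C.continuous_coord.comp ((continuous_inclusion hB).comp eB.continuous))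
      (fun _ => union_comm P N ▸ hunion ▸ C.coord_mem _) (hbot _ hB0) (hbot _ hB1)
      (inter_comm P N ▸ honce hB eB hBM) (eB.symm ⟨x, hxB⟩)
    rwa [Function.comp_apply, Function.comp_apply, eB.apply_symm_apply] at hmem

-- A boundary point of `D` lying on `M` is a point of `A`, so it excludes that `M` meets `B`.
theorem extendsNonvanishing_paramDisc_sub {A B D : Set X} (hA : A ⊆ C.carrier)
    (eA : unitInterval ≃ₜ ↥A) (hA0 : (eA 0 : X) ∈ C.top) (hA1 : (eA 1 : X) ∈ C.top)
    (hB : B ⊆ C.carrier) (eB : unitInterval ≃ₜ ↥B) (hB0 : (eB 0 : X) ∈ C.bot)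
    (hB1 : (eB 1 : X) ∈ C.bot) (hAB : Disjoint A B) (hD : D ⊆ C.carrier) (eD : ↥D ≃ₜ ↥Disc2)
    (hbdry : ∀ m : ↥D, ‖(eD m : ℂ)‖ = 1 → (m : X) ∈ A ∪ C.top)
    (hsub : ((A ∪ B) ∩ M.carrier).Subsingleton) : ExtendsNonvanishing fun u : ℂ × ℝ =>
      Chamber.paramDisc hD eD u.1 - extendDown (Chamber.paramArc hB eB) u.2 := by
  obtain ⟨P, N, hP, hN, hunion, hinter, hAP, hBN⟩ := M.exists_partition_of_arcs hA eA hA0 hA1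
    (hsub.anti (inter_subset_inter_left _ subset_union_left)) hB eB hB0 hB1
    (hsub.anti (inter_subset_inter_left _ subset_union_right))
  have hM : ∀ x : ↥C.carrier, C.coord x ∈ P → C.coord x ∈ N → (x : X) ∈ M.carrier := fun x h h' =>
    M.coord_mem_range_iff.1 (hinter ▸ ⟨h, h'⟩)
  have hcase : (∀ t, Chamber.paramArc hB eB t ∉ P) ∨
      ∀ d, ‖d‖ = 1 → Chamber.paramDisc hD eD d ∉ N := by
    rcases (B ∩ M.carrier).eq_empty_or_nonempty with hBM | ⟨b, hbB, hbM⟩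
    · exact Or.inl fun t ht => hBM.subset ⟨(eB _).2, hM _ ht (hBN _ (Or.inl (eB _).2))⟩
    · refine Or.inr fun d => Chamber.paramDisc_mem_of_norm_eq_one hD eD (Q := Nᶜ) fun m hm hmN => ?_
      have hmM := hM _ (hAP _ (hbdry m hm)) hmN
      have hmA := (hbdry m hm).resolve_right fun h => (M.subset hmM).2 (Or.inl h)
      exact hAB.notMem_of_mem_left hmA (hsub ⟨Or.inl hmA, hmM⟩ ⟨Or.inr hbB, hbM⟩ ▸ hbB)
  have : TietzeExtension.{0} ↥(P ∩ N) := hinter ▸ M.tietzeExtension_range_coord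
  refine .sub_extendDown_of_partition hP hN (hunion ▸ convex_cylinder) (fun z hz => ?_)
    (fun z hz hz0 => ?_) (Chamber.continuous_paramDisc hD eD) (fun _ => hunion ▸ C.coord_mem _)
    (fun _ => Chamber.paramDisc_mem_of_norm_eq_one hD eD fun m hm => hAP _ (hbdry m hm))
    (Chamber.continuous_paramArc hB eB) (fun _ => hBN _ (Or.inl (eB _).2))
    (fun _ => Chamber.paramArc_snd_of_notMem hB eB hB0 hB1) hcase
  · rw [hunion] at hz
    exact hz.2.1
  · rw [hunion] at hz
    rw [← C.coord_point hz] at hz0 ⊢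
    exact hBN _ (Or.inr (Chamber.mem_bot_iff.2 hz0))

theorem two_le_encard_inter {A B D : Set X} (hA : A ⊆ C.carrier) (eA : unitInterval ≃ₜ ↥A)
    (hA0 : (eA 0 : X) ∈ C.top) (hA1 : (eA 1 : X) ∈ C.top)
    (hB : IsArcWithEndpointsIn B C C.bot) (hAB : Disjoint A B) (hD : D ⊆ C.carrier)
    (eD : ↥D ≃ₜ ↥Disc2) (hbdry : Subtype.val '' (eD ⁻¹' {p | ‖(p : ℂ)‖ = 1}) ⊆ A ∪ C.top)
    (htrans : MeetsTransversally D B) (hBD : (B ∩ D).encard = 1) :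
    2 ≤ ((A ∪ B) ∩ M.carrier).encard := by
  by_contra! hlt
  have hsub : ((A ∪ B) ∩ M.carrier).Subsingleton :=
    encard_le_one_iff_subsingleton.1 (Order.le_of_lt_add_one hlt)
  have hbdryD : ∀ m : ↥D, ‖(eD m : ℂ)‖ = 1 → (m : X) ∈ A ∪ C.top := fun m hm =>
    hbdry (mem_image_of_mem _ hm)
  obtain ⟨x, hx⟩ := encard_eq_one.1 hBD
  have hxBD : x ∈ B ∩ D := hx ▸ mem_singleton x
  have hxbdry : x ∉ A ∪ C.top := fun h => h.elim (fun hxA => hAB.notMem_of_mem_left hxA hxBD.1)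
    (hB.disjoint_top.notMem_of_mem_left hxBD.1)
  obtain ⟨hBC, eB, hB0, hB1, hint⟩ := hB
  exact Chamber.not_extendsNonvanishing_paramDisc_sub hBC eB hD eD hB0 hB1 hint hx
    (htrans x hxBD.symm) (fun m hm hmx => hxbdry (hmx ▸ hbdryD m hm))
    (M.extendsNonvanishing_paramDisc_sub hA eA hA0 hA1 hBC eB hB0 hB1 hAB hD eD hbdryD hsub)

end InteriorMeridionalDisc

end ClaspedArcs

theorem clasp_criterion_general {C : Chamber X} {A B D : Set X} (hA : A ⊆ C.carrier)
    (eA : unitInterval ≃ₜ ↥A) (hA0 : (eA 0 : X) ∈ C.top) (hA1 : (eA 1 : X) ∈ C.top)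
    (hB : IsArcWithEndpointsIn B C C.bot) (hAB : Disjoint A B) (hD : D ⊆ C.carrier)
    (eD : ↥D ≃ₜ ↥Disc2) (hbdry : Subtype.val '' (eD ⁻¹' {p | ‖(p : ℂ)‖ = 1}) ⊆ A ∪ C.top)
    (htrans : MeetsTransversally D B) (hBD : (B ∩ D).encard = 1) :
    (∀ M : InteriorMeridionalDisc C, ((A ∪ B) ∩ M.carrier).Nonempty) ∧
    2 ≤ chamberIndex (A ∪ B) C ∧
    ((∃ M : InteriorMeridionalDisc C, ((A ∪ B) ∩ M.carrier).encard = 2) →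
      chamberIndex (A ∪ B) C = 2) := by
  have htwo : ∀ M : InteriorMeridionalDisc C, 2 ≤ ((A ∪ B) ∩ M.carrier).encard := fun M =>
    M.two_le_encard_inter hA eA hA0 hA1 hB hAB hD eD hbdry htrans hBD
  have hindex : 2 ≤ chamberIndex (A ∪ B) C := le_iInf htwo
  exact ⟨fun M => encard_pos.1 (two_pos.trans_le (htwo M)), hindex,
    fun ⟨M, hM⟩ => le_antisymm ((iInf_le _ M).trans hM.le) hindex⟩

/-- The clasp criterion (as in the Whitehead clasp): let `A` be an arc with both
endpoints `a₀, a₁` in `C_t`, `B` an arc with both endpoints in `C_b`, disjoint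
from `A`, both meeting `∂C` only in their endpoints. Suppose there is an
embedded disc `D ⊆ C` with boundary `A ∪ α`, where `α` is an arc in `C_t`
joining `a₀` to `a₁`, and `B` meets `D` transversally in exactly one point.
Then every interior meridional disc of `C` meets `A ∪ B`; hence
`N(A ∪ B, C) ≥ 2`, and if some interior meridional disc meets `A ∪ B`
transversally in exactly `2` points then `N(A ∪ B, C) = 2`. -/
theorem clasp_criterion {X : Type} [TopologicalSpace X]
    (C : Chamber X) (A B : Set X) (a0 a1 : X)
    (hAsub : A ⊆ C.carrier) (eA : unitInterval ≃ₜ ↥A)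
    (hA0 : ((eA 0 : ↥A) : X) = a0) (hA1 : ((eA 1 : ↥A) : X) = a1)
    (ha0 : a0 ∈ C.top) (ha1 : a1 ∈ C.top)
    (hAint : ∀ t : unitInterval, t ≠ 0 → t ≠ 1 →
      ((eA t : ↥A) : X) ∈ C.carrier \ C.bdry)
    (hB : IsArcWithEndpointsIn B C C.bot)
    (hAB : Disjoint A B)
    (D : Set X) (hDsub : D ⊆ C.carrier) (eD : ↥D ≃ₜ ↥Disc2)
    (α : Set X) (hαtop : α ⊆ C.top)
    (eα : unitInterval ≃ₜ ↥α)
    (hα0 : ((eα 0 : ↥α) : X) = a0) (hα1 : ((eα 1 : ↥α) : X) = a1)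
    (hDbdry : Subtype.val '' (eD ⁻¹' {p | ‖(p : ℂ)‖ = 1}) = A ∪ α)
    (hBDtrans : MeetsTransversally D B) (hBD1 : (B ∩ D).encard = 1) :
    (∀ M : InteriorMeridionalDisc C, ((A ∪ B) ∩ M.carrier).Nonempty) ∧
    2 ≤ chamberIndex (A ∪ B) C ∧
    ((∃ M : InteriorMeridionalDisc C, MeetsTransversally M.carrier (A ∪ B) ∧
        ((A ∪ B) ∩ M.carrier).encard = 2) → chamberIndex (A ∪ B) C = 2) := by
  obtain ⟨hmeet, hindex, heq⟩ := clasp_criterion_general hAsub eA (hA0 ▸ ha0) (hA1 ▸ ha1) hB hAB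
    hDsub eD (hDbdry ▸ union_subset_union_right A hαtop) hBDtrans hBD1
  exact ⟨hmeet, hindex, fun ⟨M, _, hM⟩ => heq ⟨M, hM⟩⟩
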